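/- Let λ : ℤ₊ → ℝ satisfy (UB). Fix t ≥ 0 and N ≥ 1 and set Δ_N = (0,1,…,N−1) ∈ W^N. Define M_N^t on GT_N by M_N^t(x^{(1)},…,x^{(N)}) = 𝔓_t^N(Δ_N, x^{(N)}) · 𝔏_{N−1}^N(x^{(N)}, x^{(N−1)}) ⋯ 𝔏_1^2(x^{(2)}, x^{(1)}). Then M_N^t is a probability measure on GT_N and its point configuration has determinantal correlation functions: for any k ≥ 1 and distinct points z_1=(n_1,u_1),…,z_k=(n_k,u_k) ∈ {1,…,N}×ℤ₊, the M_N^t-probability of the set of (x^{(1)},…,x^{(N)}) ∈ GT_N such that for every i the value u_i occurs among the coordinates of x^{(n_i)} equals det[K_t(z_i,z_j)]_{i,j=1}^k, where K_t(n_1,u_1;n_2,u_2) = 1(n_2 > n_1)·(1/λ(u_1))·(1/(2πi)) ∮_{C_λ} ψ_{u_1}(w) p_{u_2}(w) w^{n_1−n_2} dw − (1/λ(u_1))·(1/(2πi))² ∮_{C_λ} dw ∮_{C_0} du ψ_{u_1}(w) p_{u_2}(u) e^{−t(w−u)} (w^{n_1−n_2}/u^{n_2}) · (w^{n_2}−u^{n_2})/(w−u),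 with C_λ the counterclockwise circle |w| = R (R > M fixed) and C_0 the counterclockwise circle |u| = r for any fixed 0 < r < s (note (w^{n_2}−u^{n_2})/(w−u) is the polynomial Σ_{m=0}^{n_2−1} w^m u^{n_2−1−m}, so the integrand has no pole at w = u). -/

import Mathlib

open Complex MeasureTheory Finset
open scoped Real ComplexOrder

/-- ψ_x(w) = ∏_{k=0}^{x} λ(k)/(λ(k)−w). -/
noncomputable def psiF (lam : ℕ → ℝ) (x : ℕ) (w : ℂ) : ℂ :=
  ∏ k ∈ Finset.range (x + 1), (lam k : ℂ) / ((lam k : ℂ) - w)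

/-- p_x(w) = ∏_{k=0}^{x−1} (λ(k)−w)/λ(k). -/
noncomputable def pF (lam : ℕ → ℝ) (x : ℕ) (w : ℂ) : ℂ :=
  ∏ k ∈ Finset.range x, (((lam k : ℂ) - w) / (lam k : ℂ))

/-- e^{tL}(x,y) := −(1/λ(y))·(1/(2πi)) ∮_{|w|=R} ψ_y(w) p_x(w) e^{−tw} dw,
the contour being the counterclockwise circle of radius R centred at 0. -/
noncomputable def eL (lam : ℕ → ℝ) (R t : ℝ) (x y : ℕ) : ℂ :=
  -(1 / (lam y : ℂ)) * ((2 * (Real.pi : ℂ) * Complex.I)⁻¹ *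
    ∮ w in C(0, R), psiF lam y w * pF lam x w * Complex.exp (-(t : ℂ) * w))

/-- y ≺ x : interlacing, x_1 ≤ y_1 < x_2 ≤ y_2 < ⋯ ≤ y_N < x_{N+1}.
(Membership of (y,x) in W^{N,N+1} is exactly this condition.) -/
def Interlace {N : ℕ} (y : Fin N → ℕ) (x : Fin (N + 1) → ℕ) : Prop :=
  ∀ i : Fin N, x i.castSucc ≤ y i ∧ y i < x i.succ

instance {N : ℕ} (y : Fin N → ℕ) (x : Fin (N + 1) → ℕ) : Decidable (Interlace y x) :=
  inferInstanceAs (Decidable (∀ i : Fin N, x i.castSucc ≤ y i ∧ y i < x i.succ))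

/-- 𝔥_N, defined recursively: 𝔥_1 ≡ 1 and 𝔥_{N+1}(x) = Σ_{y ≺ x} ∏ λ(y_i)⁻¹ 𝔥_N(y)
(so 𝔥_1(x) = 1 since the empty interlacing condition is vacuous and the unique
y : Fin 0 → ℕ contributes the empty product). -/
noncomputable def hfun (lam : ℕ → ℝ) : (N : ℕ) → (Fin N → ℕ) → ℝ
  | 0, _ => 1
  | (N + 1), x => ∑' y : { y : Fin N → ℕ // Interlace y x },
      (∏ i, (lam (y.1 i))⁻¹) * hfun lam N y.1

/-- 𝔓_t^N(x,y) = (𝔥_N(y)/𝔥_N(x)) det(e^{tL}(x_i,y_j))_{i,j=1}^N. -/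
noncomputable def frakP (lam : ℕ → ℝ) (R t : ℝ) (N : ℕ) (x y : Fin N → ℕ) : ℂ :=
  ((hfun lam N y / hfun lam N x : ℝ) : ℂ) *
    (Matrix.of fun i j => eL lam R t (x i) (y j)).det

/-- 𝔏_N^{N+1}(x,y) = (𝔥_N(y)/𝔥_{N+1}(x)) ∏ λ(y_i)⁻¹ 1(y ≺ x). -/
noncomputable def frakL (lam : ℕ → ℝ) (N : ℕ) (x : Fin (N + 1) → ℕ) (y : Fin N → ℕ) : ℝ :=
  (hfun lam N y / hfun lam (N + 1) x) * (∏ i, (lam (y i))⁻¹) *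
    (if Interlace y x then 1 else 0)

/-- Gelfand–Tsetlin patterns with N+1 levels: level n (0-based) has n+1 particles. -/
def GTpat (N : ℕ) := (n : Fin (N + 1)) → Fin ((n : ℕ) + 1) → ℕ

/-- A pattern belongs to GT_{N+1}: each level is in its Weyl chamber and consecutive
levels interlace. -/
def IsGT {N : ℕ} (X : GTpat N) : Prop :=
  (∀ n, StrictMono (X n)) ∧ ∀ m : Fin N, Interlace (X m.castSucc) (X m.succ)

/-- The density of the Gibbs measure M_{N+1}^t on GT_{N+1}:
M^t(x^{(1)},…,x^{(N+1)}) = 𝔓_t^{N+1}(Δ_{N+1}, x^{(N+1)}) ∏_{n=1}^{N} 𝔏_n^{n+1}(x^{(n+1)}, x^{(n)}). -/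
noncomputable def dens (lam : ℕ → ℝ) (R t : ℝ) (N : ℕ) (X : GTpat N) : ℂ :=
  frakP lam R t (N + 1) (fun i => (i : ℕ)) (X (Fin.last N)) *
    ((∏ m : Fin N, frakL lam ((m : ℕ) + 1) (X m.succ) (X m.castSucc) : ℝ) : ℂ)

/-- The correlation kernel K_t(n₁,u₁;n₂,u₂), with C_λ the circle |w| = R and
C_0 the circle |u| = r, and (w^{n₂}−u^{n₂})/(w−u) written as the polynomial
Σ_{m=0}^{n₂−1} w^m u^{n₂−1−m}. -/
noncomputable def Kker (lam : ℕ → ℝ) (R r t : ℝ) (n1 u1 n2 u2 : ℕ) : ℂ :=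
  (if n1 < n2 then 1 else 0) * (1 / (lam u1 : ℂ)) *
      ((2 * (Real.pi : ℂ) * Complex.I)⁻¹ *
        ∮ w in C(0, R), psiF lam u1 w * pF lam u2 w * w ^ ((n1 : ℤ) - (n2 : ℤ)))
    - (1 / (lam u1 : ℂ)) *
      ((2 * (Real.pi : ℂ) * Complex.I)⁻¹ *
        ∮ w in C(0, R), ((2 * (Real.pi : ℂ) * Complex.I)⁻¹ *
          ∮ u in C(0, r), psiF lam u1 w * pF lam u2 u *
            Complex.exp (-(t : ℂ) * (w - u)) * w ^ ((n1 : ℤ) - (n2 : ℤ)) *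
            u ^ (-(n2 : ℤ)) * (∑ m ∈ Finset.range n2, w ^ m * u ^ (n2 - 1 - m))))

section ContourCalculus

/-- The contour integral over the circle `|w| = ρ`, normalised by `2πi`. -/
noncomputable def contourAvg (ρ : ℝ) (f : ℂ → ℂ) : ℂ :=
  (2 * (Real.pi : ℂ) * Complex.I)⁻¹ * ∮ w in C(0, ρ), f w

lemma contourAvg_congr {ρ : ℝ} (hρ : 0 ≤ ρ) {f g : ℂ → ℂ} (h : ∀ w, ‖w‖ = ρ → f w = g w) :
    contourAvg ρ f = contourAvg ρ g := by
  unfold contourAvg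
  rw [circleIntegral.integral_congr hρ fun w hw => h w (by simpa using hw)]

lemma contourAvg_const_mul (ρ : ℝ) (a : ℂ) (f : ℂ → ℂ) :
    contourAvg ρ (fun w => a * f w) = a * contourAvg ρ f := by
  unfold contourAvg
  rw [circleIntegral.integral_const_mul]
  ring

lemma contourAvg_add {ρ : ℝ} (hρ : 0 ≤ ρ) {f g : ℂ → ℂ}
    (hf : ContinuousOn f (Metric.sphere 0 ρ)) (hg : ContinuousOn g (Metric.sphere 0 ρ)) :
    contourAvg ρ (fun w => f w + g w) = contourAvg ρ f + contourAvg ρ g := by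
  unfold contourAvg
  rw [circleIntegral.integral_add (hf.circleIntegrable hρ) (hg.circleIntegrable hρ)]
  ring

lemma contourAvg_sub {ρ : ℝ} (hρ : 0 ≤ ρ) {f g : ℂ → ℂ}
    (hf : ContinuousOn f (Metric.sphere 0 ρ)) (hg : ContinuousOn g (Metric.sphere 0 ρ)) :
    contourAvg ρ (fun w => f w - g w) = contourAvg ρ f - contourAvg ρ g := by
  unfold contourAvg
  rw [circleIntegral.integral_sub (hf.circleIntegrable hρ) (hg.circleIntegrable hρ)]
  ring

lemma contourAvg_sum {ι : Type*} {ρ : ℝ} (hρ : 0 ≤ ρ) {s : Finset ι} {f : ι → ℂ → ℂ}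
    (hf : ∀ i ∈ s, ContinuousOn (f i) (Metric.sphere 0 ρ)) :
    contourAvg ρ (fun w => ∑ i ∈ s, f i w) = ∑ i ∈ s, contourAvg ρ (f i) := by
  unfold contourAvg
  rw [circleIntegral.integral_fun_sum fun i hi => (hf i hi).circleIntegrable hρ, Finset.mul_sum]

lemma norm_contourAvg_le {ρ C : ℝ} (hρ : 0 ≤ ρ) {f : ℂ → ℂ} (hf : ∀ w, ‖w‖ = ρ → ‖f w‖ ≤ C) :
    ‖contourAvg ρ f‖ ≤ ρ * C := by
  have := circleIntegral.norm_two_pi_i_inv_smul_integral_le_of_norm_le_const (c := 0) hρ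
    (f := f) (C := C) fun w hw => hf w (by simpa using hw)
  simpa [contourAvg, smul_eq_mul] using this

lemma contourAvg_eq_zero_of_differentiable {ρ : ℝ} (hρ : 0 ≤ ρ) {f : ℂ → ℂ}
    (hf : Differentiable ℂ f) : contourAvg ρ f = 0 := by
  unfold contourAvg
  rw [Complex.circleIntegral_eq_zero_of_differentiable_on_off_countable hρ Set.countable_empty
    hf.continuous.continuousOn fun z _ => hf z, mul_zero]

lemma contourAvg_radius {R R' : ℝ} (hR : 0 < R) (hRR : R ≤ R') {f : ℂ → ℂ}
    (hf : ∀ w, R ≤ ‖w‖ → DifferentiableAt ℂ f w) : contourAvg R f = contourAvg R' f := by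
  unfold contourAvg
  rw [Complex.circleIntegral_eq_of_differentiable_on_annulus_off_countable hR hRR
    Set.countable_empty]
  · intro z hz
    exact (hf z (by simpa using hz.2)).continuousAt.continuousWithinAt
  · intro z hz
    exact hf z (by simpa using (not_le.1 fun h => hz.1.2 (by simpa using h)).le)

lemma contourAvg_eq_zero_of_decay {R C : ℝ} (hR : 0 < R) {f : ℂ → ℂ}
    (hf : ∀ w, R ≤ ‖w‖ → DifferentiableAt ℂ f w) (hC : ∀ w, R ≤ ‖w‖ → ‖f w‖ ≤ C / ‖w‖ ^ 2) :
    contourAvg R f = 0 := by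
  have key : ∀ R', R ≤ R' → ‖contourAvg R f‖ ≤ C / R' := by
    intro R' h
    have h0 : 0 < R' := hR.trans_le h
    rw [contourAvg_radius hR h hf]
    refine (norm_contourAvg_le h0.le (C := C / R' ^ 2) fun w hw => ?_).trans (le_of_eq ?_)
    · rw [← hw]; exact hC w (by rw [hw]; exact h)
    · field_simp
  have hlim : Filter.Tendsto (fun R' : ℝ => C / R') Filter.atTop (nhds 0) :=
    Filter.Tendsto.const_div_atTop Filter.tendsto_id C
  have := ge_of_tendsto hlim ((Filter.eventually_ge_atTop R).mono key)
  simpa using this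

lemma contourAvg_div_sub {ρ : ℝ} {h : ℂ → ℂ} (hh : Differentiable ℂ h) {v : ℂ} (hv : ‖v‖ < ρ) :
    contourAvg ρ (fun w => h w / (w - v)) = h v := by
  have := hh.differentiableOn.circleIntegral_sub_inv_smul (R := ρ) (c := 0) (w := v)
    (by simpa using hv)
  unfold contourAvg
  simp only [smul_eq_mul] at this
  simp only [div_eq_inv_mul]
  rw [this, inv_mul_cancel_left₀ Complex.two_pi_I_ne_zero]

lemma contourAvg_zpow {ρ : ℝ} (hρ : 0 < ρ) (n : ℤ) :
    contourAvg ρ (fun w => w ^ n) = if n = -1 then 1 else 0 := by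
  unfold contourAvg
  split_ifs with h
  · subst h
    have := circleIntegral.integral_sub_center_inv (0 : ℂ) hρ.ne'
    simp only [sub_zero] at this
    simp only [zpow_neg, zpow_one]
    rw [this, inv_mul_cancel₀ Complex.two_pi_I_ne_zero]
  · have := circleIntegral.integral_sub_zpow_of_ne h 0 0 ρ
    simp only [sub_zero] at this
    rw [this, mul_zero]

end ContourCalculus

section Polynomials

lemma norm_prod_le_pow_card {ι : Type*} {S : Finset ι} {f : ι → ℂ} {C : ℝ}
    (h : ∀ k ∈ S, ‖f k‖ ≤ C) : ‖∏ k ∈ S, f k‖ ≤ C ^ S.card := by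
  rw [norm_prod, ← Finset.prod_const]
  exact Finset.prod_le_prod (fun _ _ => norm_nonneg _) h

lemma pF_zero (lam : ℕ → ℝ) (w : ℂ) : pF lam 0 w = 1 := by simp [pF]

lemma pF_succ (lam : ℕ → ℝ) (x : ℕ) (w : ℂ) :
    pF lam (x + 1) w = pF lam x w * (((lam x : ℂ) - w) / (lam x : ℂ)) :=
  Finset.prod_range_succ _ _

lemma psiF_eq_inv (lam : ℕ → ℝ) (x : ℕ) (w : ℂ) : psiF lam x w = (pF lam (x + 1) w)⁻¹ := by
  simp [psiF, pF, inv_div]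

lemma differentiable_pF (lam : ℕ → ℝ) (x : ℕ) : Differentiable ℂ (pF lam x) := by
  unfold pF
  fun_prop

lemma ofReal_sub_ne_zero_of_lt_norm {a : ℝ} (ha : 0 < a) {w : ℂ} (h : a < ‖w‖) :
    (a : ℂ) - w ≠ 0 := by
  intro h0
  have : w = a := (sub_eq_zero.1 h0).symm
  rw [this, Complex.norm_of_nonneg ha.le] at h
  exact lt_irrefl _ h

lemma pF_ne_zero {lam : ℕ → ℝ} (hpos : ∀ x, 0 < lam x) {w : ℂ} (hw : ∀ x, lam x < ‖w‖) (x : ℕ) :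
    pF lam x w ≠ 0 :=
  Finset.prod_ne_zero_iff.2 fun k _ => div_ne_zero
    (ofReal_sub_ne_zero_of_lt_norm (hpos k) (hw k)) (by exact_mod_cast (hpos k).ne')

lemma differentiableAt_psiF {lam : ℕ → ℝ} (hpos : ∀ x, 0 < lam x) {w : ℂ}
    (hw : ∀ x, lam x < ‖w‖) (x : ℕ) : DifferentiableAt ℂ (psiF lam x) w := by
  have : psiF lam x = fun w => (pF lam (x + 1) w)⁻¹ := funext fun w => psiF_eq_inv lam x w
  rw [this]
  exact ((differentiable_pF lam (x + 1)) w).inv (pF_ne_zero hpos hw _)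

lemma sum_pF_div {lam : ℕ → ℝ} (hpos : ∀ x, 0 < lam x) {v : ℂ} (hv : v ≠ 0) (u : ℕ) :
    ∑ y ∈ Finset.range u, pF lam y v / lam y = (1 - pF lam u v) / v := by
  induction u with
  | zero => simp [pF]
  | succ u ih =>
    have : (lam u : ℂ) ≠ 0 := by exact_mod_cast (hpos u).ne'
    rw [Finset.sum_range_succ, ih, pF_succ]
    field_simp
    ring

lemma sum_pF_mul_psiF {lam : ℕ → ℝ} (hpos : ∀ x, 0 < lam x) {v w : ℂ} (hw : ∀ x, lam x < ‖w‖)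
    (hvw : v ≠ w) (X : ℕ) :
    ∑ x ∈ Finset.range X, pF lam x v * psiF lam x w / lam x
      = (pF lam X v / pF lam X w - 1) / (w - v) := by
  have hwv : w - v ≠ 0 := sub_ne_zero.2 hvw.symm
  induction X with
  | zero => simp [pF]
  | succ X ih =>
    have h1 : (lam X : ℂ) ≠ 0 := by exact_mod_cast (hpos X).ne'
    have h2 := ofReal_sub_ne_zero_of_lt_norm (hpos X) (hw X)
    have h3 := pF_ne_zero hpos hw X
    rw [Finset.sum_range_succ, ih, psiF_eq_inv, pF_succ, pF_succ]
    field_simp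
    ring

lemma norm_pF_le {lam : ℕ → ℝ} {s M : ℝ} (hs : 0 < s) (hlb : ∀ x, s ≤ lam x)
    (hub : ∀ x, lam x ≤ M) (x : ℕ) (v : ℂ) : ‖pF lam x v‖ ≤ ((M + ‖v‖) / s) ^ x := by
  unfold pF
  refine (norm_prod_le_pow_card fun k _ => ?_).trans_eq (by rw [Finset.card_range])
  have hk : 0 < lam k := hs.trans_le (hlb k)
  rw [norm_div, Complex.norm_of_nonneg hk.le]
  have h1 : ‖(lam k : ℂ) - v‖ ≤ M + ‖v‖ :=
    (norm_sub_le _ _).trans (by rw [Complex.norm_of_nonneg hk.le]; linarith [hub k])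
  exact div_le_div₀ ((norm_nonneg _).trans h1) h1 hs (hlb k)

lemma sub_le_norm_ofReal_sub {a M : ℝ} (ha : 0 < a) (haM : a ≤ M) (w : ℂ) :
    ‖w‖ - M ≤ ‖(a : ℂ) - w‖ := by
  have := norm_sub_norm_le w (a : ℂ)
  rw [Complex.norm_of_nonneg ha.le, norm_sub_rev] at this
  linarith

lemma norm_psiF_le {lam : ℕ → ℝ} {M : ℝ} (hpos : ∀ x, 0 < lam x)
    (hub : ∀ x, lam x ≤ M) (x : ℕ) {w : ℂ} (hw : M < ‖w‖) :
    ‖psiF lam x w‖ ≤ (M / (‖w‖ - M)) ^ (x + 1) := by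
  unfold psiF
  refine (norm_prod_le_pow_card fun k _ => ?_).trans_eq (by rw [Finset.card_range])
  rw [norm_div, Complex.norm_of_nonneg (hpos k).le]
  exact div_le_div₀ ((hpos k).le.trans (hub k)) (hub k) (by linarith)
    (sub_le_norm_ofReal_sub (hpos k) (hub k) w)

lemma norm_pF_div_pF_le {lam : ℕ → ℝ} {M : ℝ} (hpos : ∀ x, 0 < lam x)
    (hub : ∀ x, lam x ≤ M) (x : ℕ) (v : ℂ) {w : ℂ} (hw : M < ‖w‖) :
    ‖pF lam x v / pF lam x w‖ ≤ ((M + ‖v‖) / (‖w‖ - M)) ^ x := by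
  unfold pF
  rw [← Finset.prod_div_distrib]
  refine (norm_prod_le_pow_card fun k _ => ?_).trans_eq (by rw [Finset.card_range])
  have h0 : (lam k : ℂ) ≠ 0 := by exact_mod_cast (hpos k).ne'
  rw [div_div_div_cancel_right₀ h0, norm_div]
  have h1 : ‖(lam k : ℂ) - v‖ ≤ M + ‖v‖ :=
    (norm_sub_le _ _).trans (by rw [Complex.norm_of_nonneg (hpos k).le]; linarith [hub k])
  exact div_le_div₀ ((norm_nonneg _).trans h1) h1 (by linarith)
    (sub_le_norm_ofReal_sub (hpos k) (hub k) w)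

/-- Decay at infinity of products of the factors of `psiF`. -/
lemma norm_prod_decay_le {lam : ℕ → ℝ} {M R : ℝ} (hpos : ∀ x, 0 < lam x)
    (hub : ∀ x, lam x ≤ M) (hR : M < R) (S : Finset ℕ) {n : ℕ} (hn : n ≤ S.card) {w : ℂ}
    (hw : R ≤ ‖w‖) :
    ‖∏ k ∈ S, (lam k : ℂ) / ((lam k : ℂ) - w)‖
      ≤ (M / (R - M)) ^ (S.card - n) * (M * R / (R - M)) ^ n / ‖w‖ ^ n := by
  have hM : 0 < M := (hpos 0).trans_le (hub 0)
  have hR0 : 0 < R := hM.trans hR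
  have hRM : 0 < R - M := by linarith
  have hw0 : 0 < ‖w‖ := hR0.trans_le hw
  have hfac : ∀ k, ‖(lam k : ℂ) / ((lam k : ℂ) - w)‖ ≤ M * R / (R - M) / ‖w‖ := by
    intro k
    rw [norm_div, Complex.norm_of_nonneg (hpos k).le]
    have h1 := sub_le_norm_ofReal_sub (hpos k) (hub k) w
    calc lam k / ‖(lam k : ℂ) - w‖ ≤ M / (‖w‖ - M) :=
          div_le_div₀ hM.le (hub k) (by linarith) h1
      _ ≤ M * R / (R - M) / ‖w‖ := by
          rw [div_div, div_le_div_iff₀ (by linarith) (by positivity)]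
          nlinarith [mul_nonneg hM.le hM.le, mul_nonneg (mul_nonneg hM.le hM.le) (sub_nonneg.2 hw)]
  have hle : M * R / (R - M) / ‖w‖ ≤ M / (R - M) := by
    rw [div_div, div_le_div_iff₀ (by positivity) (by positivity)]
    have := mul_le_mul_of_nonneg_left hw (mul_nonneg hM.le hRM.le)
    nlinarith
  have h0 : 0 ≤ M * R / (R - M) / ‖w‖ := by positivity
  calc ‖∏ k ∈ S, (lam k : ℂ) / ((lam k : ℂ) - w)‖
      ≤ (M * R / (R - M) / ‖w‖) ^ S.card := norm_prod_le_pow_card fun k _ => hfac k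
    _ = (M * R / (R - M) / ‖w‖) ^ (S.card - n) * (M * R / (R - M) / ‖w‖) ^ n := by
        rw [← pow_add, Nat.sub_add_cancel hn]
    _ ≤ (M / (R - M)) ^ (S.card - n) * (M * R / (R - M) / ‖w‖) ^ n := by gcongr
    _ = _ := by rw [div_pow (M * R / (R - M)) ‖w‖, mul_div_assoc']

end Polynomials

section Moments

/-- The moments of a density `q` on the circle `|v| = ρ` against the polynomials `p_u`. -/
noncomputable def pMoment (lam : ℕ → ℝ) (ρ : ℝ) (q : ℂ → ℂ) (u : ℕ) : ℂ :=
  contourAvg ρ fun v => pF lam u v * q v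

/-- The moments of `h` against the functions `-ψ_x / λ(x)` on the circle `|w| = R`. -/
noncomputable def psiMoment (lam : ℕ → ℝ) (R : ℝ) (h : ℂ → ℂ) (x : ℕ) : ℂ :=
  -(1 / (lam x : ℂ)) * contourAvg R fun w => psiF lam x w * h w

lemma exists_norm_le_on_sphere {ρ : ℝ} {q : ℂ → ℂ} (hq : ContinuousOn q (Metric.sphere 0 ρ)) :
    ∃ C, 0 ≤ C ∧ ∀ v, ‖v‖ = ρ → ‖q v‖ ≤ C := by
  obtain ⟨C, hC⟩ := (isCompact_sphere (0 : ℂ) ρ).exists_bound_of_continuousOn hq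
  exact ⟨max C 0, le_max_right _ _, fun v hv => (hC v (by simpa using hv)).trans (le_max_left _ _)⟩

lemma exists_norm_pMoment_le {lam : ℕ → ℝ} {s M : ℝ} (hs : 0 < s) (hlb : ∀ x, s ≤ lam x)
    (hub : ∀ x, lam x ≤ M) {ρ : ℝ} (hρ : 0 ≤ ρ) {q : ℂ → ℂ}
    (hq : ContinuousOn q (Metric.sphere 0 ρ)) :
    ∃ C B, 0 ≤ C ∧ 0 ≤ B ∧ ∀ u, ‖pMoment lam ρ q u‖ ≤ C * B ^ u := by
  obtain ⟨C, hC0, hC⟩ := exists_norm_le_on_sphere hq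
  have hM : 0 < M := (hs.trans_le (hlb 0)).trans_le (hub 0)
  refine ⟨ρ * C, (M + ρ) / s, by positivity, by positivity, fun u => ?_⟩
  refine (norm_contourAvg_le hρ (C := C * ((M + ρ) / s) ^ u) fun v hv => ?_).trans_eq (by ring)
  rw [norm_mul, mul_comm]
  have := norm_pF_le hs hlb hub u v
  rw [hv] at this
  exact mul_le_mul (hC v hv) this (norm_nonneg _) hC0

lemma psiMoment_radius {lam : ℕ → ℝ} {M R R' : ℝ} (hpos : ∀ x, 0 < lam x)
    (hub : ∀ x, lam x ≤ M) (hR : M < R) (hRR : R ≤ R') {h : ℂ → ℂ} (hh : Differentiable ℂ h)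
    (x : ℕ) : psiMoment lam R h x = psiMoment lam R' h x := by
  have hM : 0 < M := (hpos 0).trans_le (hub 0)
  unfold psiMoment
  rw [contourAvg_radius (hM.trans hR) hRR]
  intro w hw
  exact (differentiableAt_psiF hpos (fun k => (hub k).trans_lt (hR.trans_le hw)) x).mul (hh w)

/-- The moments against `ψ_x` of an entire function decay faster than any exponential. -/
lemma exists_norm_psiMoment_le {lam : ℕ → ℝ} {s M R : ℝ} (hs : 0 < s) (hlb : ∀ x, s ≤ lam x)
    (hub : ∀ x, lam x ≤ M) (hR : M < R) {h : ℂ → ℂ} (hh : Differentiable ℂ h) {B : ℝ}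
    (hB : 0 ≤ B) :
    ∃ C, 0 ≤ C ∧ ∀ x, ‖psiMoment lam R h x‖ * B ^ x ≤ C * (1 / 2) ^ x := by
  have hpos : ∀ x, 0 < lam x := fun x => hs.trans_le (hlb x)
  have hM : 0 < M := (hpos 0).trans_le (hub 0)
  have hR0 : 0 < R := hM.trans hR
  set R' := M + R + 2 * M * B with hR'
  have hMB : 0 ≤ M * B := by positivity
  have hRR : R ≤ R' := by linarith
  have hR'0 : 0 < R' := by linarith
  have hd : 0 < R' - M := by linarith
  obtain ⟨C, hC0, hC⟩ := exists_norm_le_on_sphere (ρ := R') hh.continuous.continuousOn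
  refine ⟨1 / s * (R' * (M / (R' - M) * C)), by positivity, fun x => ?_⟩
  rw [psiMoment_radius hpos hub hR hRR hh]
  have h1 : ‖contourAvg R' fun w => psiF lam x w * h w‖
      ≤ R' * ((M / (R' - M)) ^ (x + 1) * C) := by
    refine norm_contourAvg_le hR'0.le fun w hw => ?_
    rw [norm_mul]
    have := norm_psiF_le hpos hub x (w := w) (by linarith)
    rw [hw] at this
    exact mul_le_mul this (hC w hw) (norm_nonneg _) (by positivity)
  have h2 : ‖(-(1 / (lam x : ℂ)))‖ ≤ 1 / s := by
    rw [norm_neg, norm_div, norm_one, Complex.norm_of_nonneg (hpos x).le]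
    exact one_div_le_one_div_of_le hs (hlb x)
  have h3 : M / (R' - M) * B ≤ 1 / 2 := by
    rw [div_mul_eq_mul_div, div_le_iff₀ hd]
    linarith
  unfold psiMoment
  rw [norm_mul]
  calc ‖(-(1 / (lam x : ℂ)))‖ * ‖contourAvg R' fun w => psiF lam x w * h w‖ * B ^ x
      ≤ 1 / s * (R' * ((M / (R' - M)) ^ (x + 1) * C)) * B ^ x := by gcongr
    _ = 1 / s * (R' * (M / (R' - M) * C)) * (M / (R' - M) * B) ^ x := by
        rw [mul_pow, pow_succ]; ring
    _ ≤ _ := by gcongr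

lemma summable_mul_psiMoment {lam : ℕ → ℝ} {s M R : ℝ} (hs : 0 < s) (hlb : ∀ x, s ≤ lam x)
    (hub : ∀ x, lam x ≤ M) (hR : M < R) {h : ℂ → ℂ} (hh : Differentiable ℂ h) {f : ℕ → ℂ}
    {C B : ℝ} (hC : 0 ≤ C) (hB : 0 ≤ B) (hf : ∀ x, ‖f x‖ ≤ C * B ^ x) :
    Summable fun x => ‖f x * psiMoment lam R h x‖ := by
  obtain ⟨D, hD0, hD⟩ := exists_norm_psiMoment_le hs hlb hub hR hh hB
  refine Summable.of_nonneg_of_le (fun _ => norm_nonneg _) (fun x => ?_)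
    ((summable_geometric_two).mul_left (C * D))
  rw [norm_mul]
  calc ‖f x‖ * ‖psiMoment lam R h x‖ ≤ C * B ^ x * ‖psiMoment lam R h x‖ := by
        gcongr; exact hf x
    _ = C * (‖psiMoment lam R h x‖ * B ^ x) := by ring
    _ ≤ C * (D * (1 / 2) ^ x) := mul_le_mul_of_nonneg_left (hD x) hC
    _ = _ := by ring

lemma continuousOn_psiF_sphere {lam : ℕ → ℝ} {M R : ℝ} (hpos : ∀ x, 0 < lam x)
    (hub : ∀ x, lam x ≤ M) (hR : M < R) (x : ℕ) :
    ContinuousOn (psiF lam x) (Metric.sphere 0 R) := by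
  intro w hw
  have hw : ‖w‖ = R := by simpa using hw
  exact (differentiableAt_psiF hpos (fun k => by rw [hw]; exact (hub k).trans_lt hR)
    x).continuousAt.continuousWithinAt

/-- Expansion of an entire function in the polynomials `p_x`, with an error bound for the partial
sums. -/
lemma exists_norm_sub_sum_pF_mul_psiMoment_le {lam : ℕ → ℝ} {s M R : ℝ} (hs : 0 < s)
    (hlb : ∀ x, s ≤ lam x) (hub : ∀ x, lam x ≤ M) (hR : M < R) {h : ℂ → ℂ}
    (hh : Differentiable ℂ h) {ρ : ℝ} (hρ : 0 ≤ ρ) :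
    ∃ C, 0 ≤ C ∧ ∀ X v, ‖v‖ = ρ →
      ‖h v - ∑ x ∈ Finset.range X, pF lam x v * psiMoment lam R h x‖ ≤ C * (1 / 2) ^ X := by
  have hpos : ∀ x, 0 < lam x := fun x => hs.trans_le (hlb x)
  have hM : 0 < M := (hpos 0).trans_le (hub 0)
  have hR0 : 0 < R := hM.trans hR
  set R' := M + R + 2 * (M + ρ) with hR'
  have hRR : R ≤ R' := by linarith
  have hMR : M < R' := by linarith
  have hR'0 : 0 < R' := by linarith
  have hd : 0 < R' - M := by linarith
  have hdρ : 0 < R' - ρ := by linarith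
  obtain ⟨C, hC0, hC⟩ := exists_norm_le_on_sphere (ρ := R') hh.continuous.continuousOn
  refine ⟨R' * (C / (R' - ρ)), by positivity, fun X v hv => ?_⟩
  have hsub : ∀ w : ℂ, ‖w‖ = R' → w - v ≠ 0 := by
    intro w hw h0
    rw [sub_eq_zero.1 h0] at hw
    linarith
  have hsphere : ∀ w ∈ Metric.sphere (0 : ℂ) R', ‖w‖ = R' := fun w hw => by simpa using hw
  have hlt : ∀ w : ℂ, ‖w‖ = R' → ∀ x, lam x < ‖w‖ := fun w hw x => by
    rw [hw]; exact (hub x).trans_lt hMR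
  have e1 : ∑ x ∈ Finset.range X, pF lam x v * psiMoment lam R h x
      = contourAvg R' fun w => ∑ x ∈ Finset.range X,
          (-(pF lam x v / lam x)) * (psiF lam x w * h w) := by
    rw [contourAvg_sum hR'0.le]
    · refine Finset.sum_congr rfl fun x _ => ?_
      rw [contourAvg_const_mul, psiMoment_radius hpos hub hR hRR hh, psiMoment]
      ring
    · intro x _
      exact continuousOn_const.mul ((continuousOn_psiF_sphere hpos hub hMR x).mul
        hh.continuous.continuousOn)
  have e2 : h v - ∑ x ∈ Finset.range X, pF lam x v * psiMoment lam R h x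
      = contourAvg R' fun w => h w * (pF lam X v / pF lam X w) / (w - v) := by
    rw [e1, ← contourAvg_div_sub hh (show ‖v‖ < R' by linarith), ← contourAvg_sub hR'0.le]
    · refine contourAvg_congr hR'0.le fun w hw => ?_
      have hne : v ≠ w := fun h0 => hsub w hw (by rw [h0, sub_self])
      have := sum_pF_mul_psiF hpos (hlt w hw) hne X
      have e3 : ∑ x ∈ Finset.range X, (-(pF lam x v / lam x)) * (psiF lam x w * h w)
          = -h w * ∑ x ∈ Finset.range X, pF lam x v * psiF lam x w / lam x := by
        rw [Finset.mul_sum]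
        exact Finset.sum_congr rfl fun x _ => by ring
      rw [e3, this]
      ring
    · exact hh.continuous.continuousOn.div (by fun_prop) fun w hw => hsub w (hsphere w hw)
    · refine continuousOn_finsetSum _ fun x _ => ?_
      exact continuousOn_const.mul ((continuousOn_psiF_sphere hpos hub hMR x).mul
        hh.continuous.continuousOn)
  rw [e2]
  refine (norm_contourAvg_le hR'0.le (C := C * (1 / 2) ^ X / (R' - ρ)) fun w hw => ?_).trans_eq
    (by ring)
  have h1 := norm_pF_div_pF_le hpos hub X v (w := w) (by linarith)
  rw [hw, hv] at h1
  have h2 : (M + ρ) / (R' - M) ≤ 1 / 2 := by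
    rw [div_le_iff₀ hd]; linarith
  have h3 : R' - ρ ≤ ‖w - v‖ := by
    have := norm_sub_norm_le w v
    linarith
  rw [norm_div, norm_mul]
  gcongr
  · exact hC w hw
  · exact h1.trans (pow_le_pow_left₀ (by positivity) h2 X)

lemma hasSum_pMoment_mul_psiMoment {lam : ℕ → ℝ} {s M R : ℝ} (hs : 0 < s)
    (hlb : ∀ x, s ≤ lam x) (hub : ∀ x, lam x ≤ M) (hR : M < R) {h : ℂ → ℂ}
    (hh : Differentiable ℂ h) {ρ : ℝ} (hρ : 0 ≤ ρ) {q : ℂ → ℂ}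
    (hq : ContinuousOn q (Metric.sphere 0 ρ)) :
    HasSum (fun x => pMoment lam ρ q x * psiMoment lam R h x)
      (contourAvg ρ fun v => q v * h v) := by
  obtain ⟨C, B, hC, hB, hbd⟩ := exists_norm_pMoment_le hs hlb hub hρ hq
  have hsum : Summable fun x => pMoment lam ρ q x * psiMoment lam R h x :=
    (summable_mul_psiMoment hs hlb hub hR hh hC hB hbd).of_norm
  obtain ⟨D, hD0, hD⟩ := exists_norm_sub_sum_pF_mul_psiMoment_le hs hlb hub hR hh hρ
  obtain ⟨E, hE0, hE⟩ := exists_norm_le_on_sphere hq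
  rw [hsum.hasSum_iff_tendsto_nat]
  have key : ∀ X, ‖∑ x ∈ Finset.range X, pMoment lam ρ q x * psiMoment lam R h x
      - contourAvg ρ (fun v => q v * h v)‖ ≤ ρ * E * D * (1 / 2) ^ X := by
    intro X
    have e1 : ∑ x ∈ Finset.range X, pMoment lam ρ q x * psiMoment lam R h x
        = contourAvg ρ fun v => ∑ x ∈ Finset.range X,
            psiMoment lam R h x * (pF lam x v * q v) := by
      rw [contourAvg_sum hρ]
      · refine Finset.sum_congr rfl fun x _ => ?_
        rw [contourAvg_const_mul, pMoment, mul_comm]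
      · intro x _
        exact continuousOn_const.mul ((differentiable_pF lam x).continuous.continuousOn.mul hq)
    rw [e1, ← contourAvg_sub hρ]
    · refine (norm_contourAvg_le hρ (C := E * (D * (1 / 2) ^ X)) fun v hv => ?_).trans_eq (by ring)
      have e2 : ∑ x ∈ Finset.range X, psiMoment lam R h x * (pF lam x v * q v) - q v * h v
          = -q v * (h v - ∑ x ∈ Finset.range X, pF lam x v * psiMoment lam R h x) := by
        rw [mul_sub, Finset.mul_sum]
        simp only [neg_mul, Finset.sum_neg_distrib, sub_neg_eq_add]
        rw [neg_add_eq_sub]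
        congr 1
        exact Finset.sum_congr rfl fun x _ => by ring
      rw [e2, norm_mul, norm_neg]
      exact mul_le_mul (hE v hv) (hD X v hv) (norm_nonneg _) hE0
    · refine continuousOn_finsetSum _ fun x _ => ?_
      exact continuousOn_const.mul ((differentiable_pF lam x).continuous.continuousOn.mul hq)
    · exact hq.mul hh.continuous.continuousOn
  rw [tendsto_iff_norm_sub_tendsto_zero]
  refine squeeze_zero (fun _ => norm_nonneg _) key ?_
  have := (tendsto_pow_atTop_nhds_zero_of_lt_one (r := (1 / 2 : ℝ)) (by norm_num)
    (by norm_num)).const_mul (ρ * E * D)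
  simpa using this

lemma sum_pMoment_div {lam : ℕ → ℝ} (hpos : ∀ x, 0 < lam x) {ρ : ℝ} (hρ : 0 < ρ) {q : ℂ → ℂ}
    (hq : ContinuousOn q (Metric.sphere 0 ρ)) (u : ℕ) :
    ∑ y ∈ Finset.range u, pMoment lam ρ q y / lam y
      = contourAvg ρ (fun v => q v / v) - pMoment lam ρ (fun v => q v / v) u := by
  have hne : ∀ v : ℂ, ‖v‖ = ρ → v ≠ 0 := fun v hv h0 => by
    rw [h0, norm_zero] at hv; exact hρ.ne hv
  have hqv : ContinuousOn (fun v => q v / v) (Metric.sphere 0 ρ) :=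
    hq.div continuousOn_id fun v hv => hne v (by simpa using hv)
  have e1 : ∑ y ∈ Finset.range u, pMoment lam ρ q y / lam y
      = contourAvg ρ fun v => ∑ y ∈ Finset.range u, (1 / (lam y : ℂ)) * (pF lam y v * q v) := by
    rw [contourAvg_sum hρ.le]
    · refine Finset.sum_congr rfl fun y _ => ?_
      rw [contourAvg_const_mul, pMoment]
      ring
    · intro y _
      exact continuousOn_const.mul ((differentiable_pF lam y).continuous.continuousOn.mul hq)
  have hpq : ContinuousOn (fun v => pF lam u v * (q v / v)) (Metric.sphere 0 ρ) :=
    (differentiable_pF lam u).continuous.continuousOn.mul hqv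
  rw [e1, pMoment, ← contourAvg_sub hρ.le hqv hpq]
  refine contourAvg_congr hρ.le fun v hv => ?_
  have := sum_pF_div hpos (hne v hv) u
  calc ∑ y ∈ Finset.range u, (1 / (lam y : ℂ)) * (pF lam y v * q v)
      = q v * ∑ y ∈ Finset.range u, pF lam y v / lam y := by
        rw [Finset.mul_sum]; exact Finset.sum_congr rfl fun y _ => by ring
    _ = _ := by rw [this]; ring

lemma contourAvg_psiF_mul_pF {lam : ℕ → ℝ} {M R : ℝ} (hpos : ∀ x, 0 < lam x)
    (hub : ∀ x, lam x ≤ M) (hR : M < R) (x y : ℕ) :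
    contourAvg R (fun w => psiF lam y w * pF lam x w) = if x = y then -(lam y : ℂ) else 0 := by
  have hM : 0 < M := (hpos 0).trans_le (hub 0)
  have hR0 : 0 < R := hM.trans hR
  have hlt : ∀ w : ℂ, R ≤ ‖w‖ → ∀ k, lam k < ‖w‖ := fun w hw k =>
    (hub k).trans_lt (hR.trans_le hw)
  rcases lt_trichotomy x y with hxy | hxy | hxy
  · rw [if_neg hxy.ne]
    have hfun : ∀ w : ℂ, R ≤ ‖w‖ → psiF lam y w * pF lam x w
        = ∏ k ∈ Finset.Ico x (y + 1), (lam k : ℂ) / ((lam k : ℂ) - w) := by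
      intro w hw
      have h1 := pF_ne_zero hpos (hlt w hw) x
      have h2 : psiF lam y w = (pF lam x w)⁻¹ *
          ∏ k ∈ Finset.Ico x (y + 1), (lam k : ℂ) / ((lam k : ℂ) - w) := by
        rw [psiF, ← Finset.prod_range_mul_prod_Ico _ (show x ≤ y + 1 by omega)]
        simp [pF, inv_div]
      rw [h2]
      field_simp
    refine contourAvg_eq_zero_of_decay hR0 (C := (M / (R - M)) ^ (y + 1 - x - 2)
      * (M * R / (R - M)) ^ 2) (fun w hw => ?_) (fun w hw => ?_)
    · exact (differentiableAt_psiF hpos (hlt w hw) y).mul (differentiable_pF lam x w)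
    · rw [hfun w hw]
      have := norm_prod_decay_le hpos hub hR (Finset.Ico x (y + 1)) (n := 2)
        (by rw [Nat.card_Ico]; omega) hw
      rwa [Nat.card_Ico] at this
  · subst hxy
    rw [if_pos rfl]
    have := contourAvg_div_sub (ρ := R) (h := fun _ => -(lam x : ℂ)) (v := lam x)
      (differentiable_const _)
      (by rw [Complex.norm_of_nonneg (hpos x).le]; exact (hub x).trans_lt hR)
    rw [← this]
    refine contourAvg_congr hR0.le fun w hw => ?_
    have h1 := pF_ne_zero hpos (hlt w hw.ge) x
    have h2 := ofReal_sub_ne_zero_of_lt_norm (hpos x) (hlt w hw.ge x)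
    have h3 : w - (lam x : ℂ) ≠ 0 := by rw [← neg_sub]; exact neg_ne_zero.2 h2
    have h4 : (lam x : ℂ) ≠ 0 := by exact_mod_cast (hpos x).ne'
    rw [psiF_eq_inv, pF_succ, mul_inv, inv_div, mul_right_comm, inv_mul_cancel₀ h1, one_mul,
      div_eq_div_iff h2 h3]
    ring
  · rw [if_neg hxy.ne']
    rw [contourAvg_congr hR0.le (g := fun w => ∏ k ∈ Finset.Ico (y + 1) x,
      ((lam k : ℂ) - w) / (lam k : ℂ))]
    · exact contourAvg_eq_zero_of_differentiable hR0.le (by fun_prop)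
    · intro w hw
      have h1 := pF_ne_zero hpos (hlt w hw.ge) (y + 1)
      have h2 : pF lam x w = pF lam (y + 1) w *
          ∏ k ∈ Finset.Ico (y + 1) x, ((lam k : ℂ) - w) / (lam k : ℂ) := by
        rw [pF, pF, Finset.prod_range_mul_prod_Ico _ (show y + 1 ≤ x by omega)]
      rw [psiF_eq_inv, h2, inv_mul_cancel_left₀ h1]

lemma contourAvg_psiF_mul_zpow_neg {lam : ℕ → ℝ} {M R : ℝ} (hpos : ∀ x, 0 < lam x)
    (hub : ∀ x, lam x ≤ M) (hR : M < R) (x k : ℕ) :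
    contourAvg R (fun w => psiF lam x w * w ^ (-(k : ℤ) - 1)) = 0 := by
  have hM : 0 < M := (hpos 0).trans_le (hub 0)
  have hR0 : 0 < R := hM.trans hR
  have hd : 0 < R - M := by linarith
  have hlt : ∀ w : ℂ, R ≤ ‖w‖ → ∀ k, lam k < ‖w‖ := fun w hw k =>
    (hub k).trans_lt (hR.trans_le hw)
  have hne : ∀ w : ℂ, R ≤ ‖w‖ → w ≠ 0 := fun w hw h0 => by
    rw [h0, norm_zero] at hw; linarith
  refine contourAvg_eq_zero_of_decay hR0 (C := (M / (R - M)) ^ x * (M * R / (R - M)) * (R ^ k)⁻¹)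
    (fun w hw => ?_) (fun w hw => ?_)
  · exact (differentiableAt_psiF hpos (hlt w hw) x).mul
      (differentiableAt_zpow.2 (Or.inl (hne w hw)))
  · have h1 := norm_prod_decay_le hpos hub hR (Finset.range (x + 1)) (n := 1)
      (by rw [Finset.card_range]; omega) hw
    rw [Finset.card_range, Nat.add_sub_cancel, pow_one, pow_one] at h1
    have hw0 : 0 < ‖w‖ := hR0.trans_le hw
    have h2 : ‖w ^ (-(k : ℤ) - 1)‖ ≤ (R ^ k)⁻¹ / ‖w‖ := by
      rw [norm_zpow, zpow_sub_one₀ hw0.ne', zpow_neg, zpow_natCast, ← div_eq_mul_inv]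
      gcongr
    rw [norm_mul]
    refine (mul_le_mul h1 h2 (norm_nonneg _) (by positivity)).trans_eq ?_
    field_simp

end Moments

section KernelFunctions

/-- The functions `Ψ` entering the correlation kernel. -/
noncomputable def kerPsi (lam : ℕ → ℝ) (R t : ℝ) (m : ℤ) (x : ℕ) : ℂ :=
  psiMoment lam R (fun w => w ^ m * Complex.exp (-(t : ℂ) * w)) x

/-- The functions `Φ` entering the correlation kernel. -/
noncomputable def kerPhi (lam : ℕ → ℝ) (r t : ℝ) (m : ℤ) (u : ℕ) : ℂ :=
  pMoment lam r (fun v => Complex.exp ((t : ℂ) * v) * v ^ (-m - 1)) u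

/-- The value at the origin of `kerPhi`. -/
noncomputable def kerPhiZero (r t : ℝ) (m : ℤ) : ℂ :=
  contourAvg r fun v => Complex.exp ((t : ℂ) * v) * v ^ (-m - 1)

/-- The transition function over `k` levels, up to the sign `(-1) ^ (k - 1)`. -/
noncomputable def kerTrans (lam : ℕ → ℝ) (R : ℝ) (k : ℕ) (x u : ℕ) : ℂ :=
  1 / (lam x : ℂ) * pMoment lam R (fun v => psiF lam x v * v ^ (-(k : ℤ))) u

lemma pMoment_congr (lam : ℕ → ℝ) {ρ : ℝ} (hρ : 0 ≤ ρ) {q q' : ℂ → ℂ}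
    (h : ∀ v, ‖v‖ = ρ → q v = q' v) (u : ℕ) : pMoment lam ρ q u = pMoment lam ρ q' u :=
  contourAvg_congr hρ fun v hv => by rw [h v hv]

lemma ne_zero_of_norm_eq {ρ : ℝ} (hρ : 0 < ρ) {v : ℂ} (hv : ‖v‖ = ρ) : v ≠ 0 := by
  rw [← norm_pos_iff, hv]
  exact hρ

lemma continuousOn_zpow_sphere {ρ : ℝ} (hρ : 0 < ρ) (n : ℤ) :
    ContinuousOn (fun v : ℂ => v ^ n) (Metric.sphere 0 ρ) :=
  continuousOn_id.zpow₀ n fun v hv => Or.inl (ne_zero_of_norm_eq hρ (by simpa using hv))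

lemma kerPhi_of_neg (lam : ℕ → ℝ) {r : ℝ} (hr : 0 < r) (t : ℝ) {m : ℤ} (hm : m < 0) (u : ℕ) :
    kerPhi lam r t m u = 0 := by
  obtain ⟨n, hn⟩ := Int.eq_ofNat_of_zero_le (show 0 ≤ -m - 1 by omega)
  unfold kerPhi pMoment
  rw [hn]
  simp only [zpow_natCast]
  have := differentiable_pF lam u
  exact contourAvg_eq_zero_of_differentiable hr.le (by fun_prop)

lemma kerPhi_apply_zero (lam : ℕ → ℝ) (r t : ℝ) (m : ℤ) :
    kerPhi lam r t m 0 = kerPhiZero r t m := by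
  simp [kerPhi, pMoment, kerPhiZero, pF_zero]

lemma kerPhiZero_of_neg {r : ℝ} (hr : 0 < r) (t : ℝ) {m : ℤ} (hm : m < 0) :
    kerPhiZero r t m = 0 := by
  rw [← kerPhi_apply_zero (fun _ => 1), kerPhi_of_neg _ hr t hm]

lemma kerPhiZero_zero {r : ℝ} (hr : 0 < r) (t : ℝ) : kerPhiZero r t 0 = 1 := by
  have := contourAvg_div_sub (ρ := r) (h := fun v => Complex.exp ((t : ℂ) * v)) (v := 0)
    (by fun_prop) (by simpa using hr)
  simp only [sub_zero, mul_zero, Complex.exp_zero] at this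
  rw [← this]
  simp [kerPhiZero, div_eq_mul_inv]

lemma continuousOn_exp_mul_zpow {r : ℝ} (hr : 0 < r) (t : ℂ) (n : ℤ) :
    ContinuousOn (fun v : ℂ => Complex.exp (t * v) * v ^ n) (Metric.sphere 0 r) :=
  ContinuousOn.mul (by fun_prop) (continuousOn_zpow_sphere hr n)

lemma kerPhi_succ {lam : ℕ → ℝ} (hpos : ∀ x, 0 < lam x) {r : ℝ} (hr : 0 < r) (t : ℝ) (m : ℤ)
    (u : ℕ) : kerPhi lam r t (m + 1) u
      = kerPhiZero r t (m + 1) - ∑ y ∈ Finset.range u, kerPhi lam r t m y / lam y := by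
  have e : ∀ v : ℂ, ‖v‖ = r → Complex.exp ((t : ℂ) * v) * v ^ (-m - 1) / v
      = Complex.exp ((t : ℂ) * v) * v ^ (-(m + 1) - 1) := by
    intro v hv
    have hv0 := ne_zero_of_norm_eq hr hv
    rw [show -(m + 1) - 1 = -m - 1 - 1 by ring, zpow_sub_one₀ hv0 (-m - 1)]
    ring
  unfold kerPhi
  rw [sum_pMoment_div hpos hr (continuousOn_exp_mul_zpow hr t _), pMoment_congr lam hr.le e,
    contourAvg_congr hr.le e, kerPhiZero, sub_sub_cancel]

lemma kerTrans_succ {lam : ℕ → ℝ} {M R : ℝ} (hpos : ∀ x, 0 < lam x) (hub : ∀ x, lam x ≤ M)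
    (hR : M < R) (k x u : ℕ) : kerTrans lam R (k + 1) x u
      = -∑ y ∈ Finset.range u, kerTrans lam R k x y / lam y := by
  have hR0 : 0 < R := ((hpos 0).trans_le (hub 0)).trans hR
  have e : ∀ v : ℂ, ‖v‖ = R → psiF lam x v * v ^ (-(k : ℤ)) / v
      = psiF lam x v * v ^ (-(k : ℤ) - 1) := by
    intro v hv
    rw [zpow_sub_one₀ (ne_zero_of_norm_eq hR0 hv)]
    ring
  have h1 : ∑ y ∈ Finset.range u, kerTrans lam R k x y / lam y = 1 / (lam x : ℂ) *
      ∑ y ∈ Finset.range u, pMoment lam R (fun v => psiF lam x v * v ^ (-(k : ℤ))) y / lam y := by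
    rw [Finset.mul_sum]
    exact Finset.sum_congr rfl fun y _ => by rw [kerTrans]; ring
  have hq : ContinuousOn (fun v => psiF lam x v * v ^ (-(k : ℤ))) (Metric.sphere 0 R) :=
    (continuousOn_psiF_sphere hpos hub hR x).mul (continuousOn_zpow_sphere hR0 _)
  rw [h1, sum_pMoment_div hpos hR0 hq, pMoment_congr lam hR0.le e, contourAvg_congr hR0.le e,
    contourAvg_psiF_mul_zpow_neg hpos hub hR, kerTrans]
  rw [show (-((k + 1 : ℕ) : ℤ)) = -(k : ℤ) - 1 by push_cast; ring]
  ring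

lemma kerTrans_zero {lam : ℕ → ℝ} {M R : ℝ} (hpos : ∀ x, 0 < lam x) (hub : ∀ x, lam x ≤ M)
    (hR : M < R) (x u : ℕ) : kerTrans lam R 0 x u = if u = x then -1 else 0 := by
  have h1 : (lam x : ℂ) ≠ 0 := by exact_mod_cast (hpos x).ne'
  have := contourAvg_psiF_mul_pF hpos hub hR u x
  unfold kerTrans pMoment
  simp only [Nat.cast_zero, neg_zero, zpow_zero, mul_one]
  simp only [mul_comm (pF lam u _)]
  rw [this]
  split_ifs
  · field_simp
  · simp

lemma hasSum_kerPhi_mul_kerPsi {lam : ℕ → ℝ} {s M R r : ℝ} (hs : 0 < s)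
    (hlb : ∀ x, s ≤ lam x) (hub : ∀ x, lam x ≤ M) (hR : M < R) (hr : 0 < r) (t : ℝ) (m n : ℕ) :
    HasSum (fun x => kerPhi lam r t m x * kerPsi lam R t n x) (if m = n then 1 else 0) := by
  unfold kerPhi kerPsi
  simp only [zpow_natCast]
  convert hasSum_pMoment_mul_psiMoment hs hlb hub hR
    (h := fun w => w ^ n * Complex.exp (-(t : ℂ) * w)) (by fun_prop) hr.le
    (continuousOn_exp_mul_zpow hr t _) using 1
  rw [contourAvg_congr hr.le (g := fun v => v ^ ((n : ℤ) - m - 1)), contourAvg_zpow hr]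
  · exact if_congr (by omega) rfl rfl
  · intro v hv
    have hv0 := ne_zero_of_norm_eq hr hv
    rw [show (n : ℤ) - m - 1 = (-m - 1) + n by ring, zpow_add₀ hv0, zpow_natCast, neg_mul,
      Complex.exp_neg]
    field_simp

lemma hasSum_kerTrans_mul_kerPsi {lam : ℕ → ℝ} {s M R : ℝ} (hs : 0 < s)
    (hlb : ∀ x, s ≤ lam x) (hub : ∀ x, lam x ≤ M) (hR : M < R) (t : ℝ) (k u n : ℕ) :
    HasSum (fun x => kerTrans lam R k u x * kerPsi lam R t n x)
      (-kerPsi lam R t ((n : ℤ) - k) u) := by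
  have hpos : ∀ x, 0 < lam x := fun x => hs.trans_le (hlb x)
  have hR0 : 0 < R := ((hpos 0).trans_le (hub 0)).trans hR
  have hq : ContinuousOn (fun v => psiF lam u v * v ^ (-(k : ℤ))) (Metric.sphere 0 R) :=
    (continuousOn_psiF_sphere hpos hub hR u).mul (continuousOn_zpow_sphere hR0 _)
  have := (hasSum_pMoment_mul_psiMoment hs hlb hub hR
    (h := fun w => w ^ n * Complex.exp (-(t : ℂ) * w)) (by fun_prop) hR0.le
    hq).mul_left (1 / (lam u : ℂ))
  have hf : (fun x => kerTrans lam R k u x * kerPsi lam R t n x) = fun x => 1 / (lam u : ℂ) *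
      (pMoment lam R (fun v => psiF lam u v * v ^ (-(k : ℤ))) x *
        psiMoment lam R (fun w => w ^ n * Complex.exp (-(t : ℂ) * w)) x) := by
    funext x
    simp only [kerTrans, kerPsi, zpow_natCast]
    ring
  have hval : -kerPsi lam R t ((n : ℤ) - k) u = 1 / (lam u : ℂ) * contourAvg R
      fun v => psiF lam u v * v ^ (-(k : ℤ)) * (v ^ n * Complex.exp (-(t : ℂ) * v)) := by
    rw [kerPsi, psiMoment, ← neg_mul, neg_neg]
    congr 1
    refine contourAvg_congr hR0.le fun v hv => ?_
    rw [zpow_sub₀ (ne_zero_of_norm_eq hR0 hv), zpow_natCast, zpow_neg, zpow_natCast]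
    ring
  rw [hf, hval]
  exact this

lemma Kker_eq {lam : ℕ → ℝ} {s M R r : ℝ} (hs : 0 < s) (hlb : ∀ x, s ≤ lam x)
    (hub : ∀ x, lam x ≤ M) (hR : M < R) (hr : 0 < r) (t : ℝ) {N l₁ l₂ : ℕ} (hl : l₂ ≤ N)
    (u₁ u₂ : ℕ) :
    Kker lam R r t (l₁ + 1) u₁ (l₂ + 1) u₂
      = (if l₁ < l₂ then kerTrans lam R (l₂ - l₁) u₁ u₂ else 0)
        + ∑ j : Fin (N + 1),
            kerPsi lam R t ((l₁ : ℤ) - j) u₁ * kerPhi lam r t ((l₂ : ℤ) - j) u₂ := by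
  have hpos : ∀ x, 0 < lam x := fun x => hs.trans_le (hlb x)
  have hR0 : 0 < R := ((hpos 0).trans_le (hub 0)).trans hR
  have e1 : (if l₁ + 1 < l₂ + 1 then 1 else 0) * (1 / (lam u₁ : ℂ)) *
      ((2 * (Real.pi : ℂ) * Complex.I)⁻¹ *
        ∮ w in C(0, R), psiF lam u₁ w * pF lam u₂ w * w ^ (((l₁ + 1 : ℕ) : ℤ) - ((l₂ + 1 : ℕ) : ℤ)))
      = if l₁ < l₂ then kerTrans lam R (l₂ - l₁) u₁ u₂ else 0 := by
    simp only [add_lt_add_iff_right]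
    split_ifs with h
    · rw [one_mul, kerTrans, pMoment]
      congr 1
      refine contourAvg_congr hR0.le fun w _ => ?_
      rw [show -((l₂ - l₁ : ℕ) : ℤ) = ((l₁ + 1 : ℕ) : ℤ) - ((l₂ + 1 : ℕ) : ℤ) by
        push_cast [h.le]; ring]
      ring
    · simp
  have e2 : ∀ w : ℂ, ‖w‖ = R → (contourAvg r fun u => psiF lam u₁ w * pF lam u₂ u *
            Complex.exp (-(t : ℂ) * (w - u)) * w ^ (((l₁ + 1 : ℕ) : ℤ) - ((l₂ + 1 : ℕ) : ℤ)) *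
            u ^ (-((l₂ + 1 : ℕ) : ℤ)) *
            (∑ m ∈ Finset.range (l₂ + 1), w ^ m * u ^ (l₂ + 1 - 1 - m)))
      = ∑ j ∈ Finset.range (l₂ + 1), kerPhi lam r t ((l₂ : ℤ) - j) u₂ *
          (psiF lam u₁ w * (w ^ ((l₁ : ℤ) - j) * Complex.exp (-(t : ℂ) * w))) := by
    intro w hw
    have hw0 := ne_zero_of_norm_eq hR0 hw
    have e3 : ∀ u : ℂ, ‖u‖ = r → psiF lam u₁ w * pF lam u₂ u *
            Complex.exp (-(t : ℂ) * (w - u)) * w ^ (((l₁ + 1 : ℕ) : ℤ) - ((l₂ + 1 : ℕ) : ℤ)) *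
            u ^ (-((l₂ + 1 : ℕ) : ℤ)) *
            (∑ m ∈ Finset.range (l₂ + 1), w ^ m * u ^ (l₂ + 1 - 1 - m))
        = ∑ j ∈ Finset.range (l₂ + 1),
          (psiF lam u₁ w * (w ^ ((l₁ : ℤ) - j) * Complex.exp (-(t : ℂ) * w))) *
          (pF lam u₂ u * (Complex.exp ((t : ℂ) * u) * u ^ (-((l₂ : ℤ) - j) - 1))) := by
      intro u hu
      have hu0 := ne_zero_of_norm_eq hr hu
      rw [← Finset.sum_range_reflect, Finset.mul_sum]
      refine Finset.sum_congr rfl fun j hj => ?_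
      have hj : j ≤ l₂ := Nat.lt_succ_iff.1 (Finset.mem_range.1 hj)
      have h1 : l₂ + 1 - 1 - (l₂ + 1 - 1 - j) = j := by omega
      have h2 : w ^ ((l₁ : ℤ) - j) = w ^ (((l₁ + 1 : ℕ) : ℤ) - ((l₂ + 1 : ℕ) : ℤ)) *
          w ^ (l₂ + 1 - 1 - j) := by
        rw [← zpow_natCast w (l₂ + 1 - 1 - j), ← zpow_add₀ hw0]
        congr 1
        omega
      have h3 : u ^ (-((l₂ : ℤ) - j) - 1) = u ^ (-((l₂ + 1 : ℕ) : ℤ)) * u ^ j := by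
        rw [← zpow_natCast u j, ← zpow_add₀ hu0]
        congr 1
        push_cast
        ring
      have h4 : Complex.exp (-(t : ℂ) * (w - u))
          = Complex.exp (-(t : ℂ) * w) * Complex.exp ((t : ℂ) * u) := by
        rw [← Complex.exp_add]
        congr 1
        ring
      rw [h1, h2, h3, h4]
      ring
    rw [contourAvg_congr hr.le e3, contourAvg_sum hr.le]
    · refine Finset.sum_congr rfl fun j _ => ?_
      rw [contourAvg_const_mul, mul_comm]
      rfl
    · intro j _
      exact continuousOn_const.mul ((differentiable_pF lam u₂).continuous.continuousOn.mul
        (continuousOn_exp_mul_zpow hr t _))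
  have e4 : (contourAvg R fun w => contourAvg r fun u => psiF lam u₁ w * pF lam u₂ u *
            Complex.exp (-(t : ℂ) * (w - u)) * w ^ (((l₁ + 1 : ℕ) : ℤ) - ((l₂ + 1 : ℕ) : ℤ)) *
            u ^ (-((l₂ + 1 : ℕ) : ℤ)) *
            (∑ m ∈ Finset.range (l₂ + 1), w ^ m * u ^ (l₂ + 1 - 1 - m)))
      = ∑ j ∈ Finset.range (l₂ + 1), kerPhi lam r t ((l₂ : ℤ) - j) u₂ *
          contourAvg R fun w =>
          (psiF lam u₁ w * (w ^ ((l₁ : ℤ) - j) * Complex.exp (-(t : ℂ) * w))) := by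
    rw [contourAvg_congr hR0.le e2, contourAvg_sum hR0.le]
    · exact Finset.sum_congr rfl fun j _ => contourAvg_const_mul _ _ _
    · intro j _
      exact continuousOn_const.mul ((continuousOn_psiF_sphere hpos hub hR u₁).mul
        ((continuousOn_zpow_sphere hR0 _).mul (by fun_prop)))
  have e5 : ∑ j : Fin (N + 1), kerPsi lam R t ((l₁ : ℤ) - j) u₁ * kerPhi lam r t ((l₂ : ℤ) - j) u₂
      = ∑ j ∈ Finset.range (l₂ + 1),
          kerPsi lam R t ((l₁ : ℤ) - j) u₁ * kerPhi lam r t ((l₂ : ℤ) - j) u₂ := by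
    rw [Fin.sum_univ_eq_sum_range fun j : ℕ =>
      kerPsi lam R t ((l₁ : ℤ) - j) u₁ * kerPhi lam r t ((l₂ : ℤ) - j) u₂]
    symm
    refine Finset.sum_subset (Finset.range_mono (by omega)) fun j _ hj => ?_
    rw [Finset.mem_range] at hj
    rw [kerPhi_of_neg lam hr t (by omega), mul_zero]
  unfold Kker
  rw [e1, e5, sub_eq_add_neg]
  congr 1
  change -(1 / (lam u₁ : ℂ) * contourAvg R fun w => contourAvg r fun u => _) = _
  rw [e4, Finset.mul_sum, ← Finset.sum_neg_distrib]
  refine Finset.sum_congr rfl fun j _ => ?_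
  rw [kerPsi, psiMoment]
  ring

end KernelFunctions

section TopLevel

lemma sign_revPerm (n : ℕ) :
    ((Equiv.Perm.sign (Fin.revPerm : Equiv.Perm (Fin n)) : ℤ) : ℂ)
      = ∏ i : Fin n, (-1) ^ (i : ℕ) := by
  have key : ∀ n : ℕ, ((1 : Matrix (Fin n) (Fin n) ℂ).submatrix Fin.revPerm id).det
      = ∏ i : Fin n, (-1) ^ (i : ℕ) := by
    intro n
    induction n with
    | zero => simp
    | succ n ih =>
      rw [Matrix.det_succ_row_zero, Finset.sum_eq_single (Fin.last n), Fin.prod_univ_castSucc]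
      · have : (((1 : Matrix (Fin (n + 1)) (Fin (n + 1)) ℂ).submatrix Fin.revPerm id).submatrix
            Fin.succ (Fin.last n).succAbove) = (1 : Matrix (Fin n) (Fin n) ℂ).submatrix
              Fin.revPerm id := by
          ext i j
          simp [Matrix.one_apply, Fin.rev_succ]
        have h0 : (1 : Matrix (Fin (n + 1)) (Fin (n + 1)) ℂ) (Fin.revPerm 0) (Fin.last n) = 1 := by
          rw [Fin.revPerm_apply, Fin.rev_zero, Matrix.one_apply_eq]
        rw [this, ih, Matrix.submatrix_apply, id, h0]
        simp [mul_comm]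
      · intro j _ hj
        simp [hj.symm]
      · simp
  rw [← key, Matrix.det_permute, Matrix.det_one, mul_one]

lemma exists_pF_coeff (lam : ℕ → ℝ) : ∃ c : ℕ → ℕ → ℂ, (∀ i k, i < k → c i k = 0) ∧
    (∀ i, c i i = ∏ m ∈ Finset.range i, -(lam m : ℂ)⁻¹) ∧
    ∀ n i w, i < n → pF lam i w = ∑ k ∈ Finset.range n, c i k * w ^ k := by
  open Polynomial in
  let q : ℕ → ℂ[X] := fun i => ∏ m ∈ Finset.range i, (C ((lam m : ℂ) / lam m) - C (lam m : ℂ)⁻¹ * X)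
  have hdeg1 : ∀ m, (Polynomial.C ((lam m : ℂ) / lam m)
      - Polynomial.C (lam m : ℂ)⁻¹ * Polynomial.X).natDegree ≤ 1 := by
    intro m
    compute_degree
  have hdeg : ∀ i, (q i).natDegree ≤ i := by
    intro i
    refine (Polynomial.natDegree_prod_le _ _).trans ?_
    exact (Finset.sum_le_sum fun m _ => hdeg1 m).trans (by simp)
  refine ⟨fun i k => (q i).coeff k, fun i k h =>
    Polynomial.coeff_eq_zero_of_natDegree_lt ((hdeg i).trans_lt h), fun i => ?_, fun n i w hn => ?_⟩
  · have := Polynomial.coeff_prod_of_natDegree_le (s := Finset.range i)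
      (fun m => Polynomial.C ((lam m : ℂ) / lam m) - Polynomial.C (lam m : ℂ)⁻¹ * Polynomial.X) 1
      (fun m _ => hdeg1 m)
    simp only [Finset.card_range, mul_one] at this
    simp only [q, this]
    simp [Polynomial.coeff_C]
  · rw [← Polynomial.eval_eq_sum_range' ((hdeg i).trans_lt hn), Polynomial.eval_prod, pF]
    refine Finset.prod_congr rfl fun m _ => ?_
    simp only [Polynomial.eval_sub, Polynomial.eval_mul, Polynomial.eval_C, Polynomial.eval_X]
    ring

lemma strictMono_of_interlace {N : ℕ} {x : Fin (N + 1) → ℕ} {y : Fin N → ℕ}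
    (h : Interlace y x) : StrictMono y := by
  cases N with
  | zero => exact fun i => i.elim0
  | succ n =>
    rw [Fin.strictMono_iff_lt_succ]
    intro i
    have h1 := (h i.castSucc).2
    have h2 := (h i.succ).1
    rw [Fin.succ_castSucc] at h1
    omega

lemma finite_interlace {N : ℕ} (x : Fin (N + 1) → ℕ) :
    Finite { y : Fin N → ℕ // Interlace y x } := by
  refine Set.Finite.to_subtype ((Set.finite_Iic fun i : Fin N => x i.succ).subset fun y hy i => ?_)
  exact (hy i).2.le

lemma hfun_pos {lam : ℕ → ℝ} (hpos : ∀ x, 0 < lam x) : ∀ (N : ℕ) (x : Fin N → ℕ),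
    StrictMono x → 0 < hfun lam N x
  | 0, _, _ => by simp [hfun]
  | N + 1, x, hx => by
    have := finite_interlace x
    have hp : ∀ y : { y : Fin N → ℕ // Interlace y x },
        0 < (∏ i, (lam (y.1 i))⁻¹) * hfun lam N y.1 := fun y =>
      mul_pos (Finset.prod_pos fun i _ => inv_pos.2 (hpos _))
        (hfun_pos hpos N y.1 (strictMono_of_interlace y.2))
    rw [hfun]
    exact (Summable.of_finite).tsum_pos (fun y => (hp y).le)
      ⟨fun i => x i.castSucc, fun i => ⟨le_rfl, hx (Fin.castSucc_lt_succ)⟩⟩ (hp _)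

lemma hfun_one (lam : ℕ → ℝ) (x : Fin 1 → ℕ) : hfun lam 1 x = 1 := by
  rw [hfun]
  have : Unique { y : Fin 0 → ℕ // Interlace y x } :=
    ⟨⟨⟨Fin.elim0, fun i => i.elim0⟩⟩, fun _ => Subtype.ext (Subsingleton.elim _ _)⟩
  rw [tsum_eq_single default (fun y hy => (hy (Subsingleton.elim _ _)).elim)]
  simp [hfun]

lemma hfun_packed (lam : ℕ → ℝ) (N : ℕ) : hfun lam N (fun i => (i : ℕ))
    = ∏ m : Fin N, ∏ i ∈ Finset.range m, (lam i)⁻¹ := by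
  induction N with
  | zero => simp [hfun]
  | succ N ih =>
    have hd : Interlace (fun i : Fin N => (i : ℕ)) (fun i : Fin (N + 1) => (i : ℕ)) :=
      fun i => ⟨by simp, by simp⟩
    have huniq : ∀ y : { y : Fin N → ℕ // Interlace y (fun i : Fin (N + 1) => (i : ℕ)) },
        y = ⟨_, hd⟩ := by
      rintro ⟨y, hy⟩
      refine Subtype.ext (funext fun i => ?_)
      have := hy i
      simp only [Fin.val_castSucc, Fin.val_succ] at this
      simp only
      omega
    rw [hfun, tsum_eq_single ⟨_, hd⟩ fun y hy => (hy (huniq y)).elim, ih, Fin.prod_univ_castSucc,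
      mul_comm]
    congr 1
    exact Fin.prod_univ_eq_prod_range (fun i => (lam i)⁻¹) N

lemma eL_eq_psiMoment (lam : ℕ → ℝ) (R t : ℝ) (x y : ℕ) : eL lam R t x y
    = psiMoment lam R (fun w => pF lam x w * Complex.exp (-(t : ℂ) * w)) y := by
  simp only [eL, psiMoment, contourAvg, mul_assoc]

lemma det_eL {lam : ℕ → ℝ} {M R : ℝ} (hpos : ∀ x, 0 < lam x) (hub : ∀ x, lam x ≤ M)
    (hR : M < R) (t : ℝ) (N : ℕ) (x : Fin (N + 1) → ℕ) :
    (Matrix.of fun i j : Fin (N + 1) => eL lam R t (i : ℕ) (x j)).det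
      = ((hfun lam (N + 1) (fun i => (i : ℕ)) : ℝ) : ℂ) *
        (Matrix.of fun i j : Fin (N + 1) => kerPsi lam R t ((N : ℤ) - (i : ℕ)) (x j)).det := by
  have hR0 : 0 < R := ((hpos 0).trans_le (hub 0)).trans hR
  obtain ⟨c, hc0, hc1, hc⟩ := exists_pF_coeff lam
  set A : Matrix (Fin (N + 1)) (Fin (N + 1)) ℂ := Matrix.of fun i k => c i k with hA
  set B : Matrix (Fin (N + 1)) (Fin (N + 1)) ℂ :=
    Matrix.of fun k j => kerPsi lam R t (k : ℕ) (x j) with hB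
  have h1 : (Matrix.of fun i j : Fin (N + 1) => eL lam R t (i : ℕ) (x j)) = A * B := by
    ext i j
    have hcts : ∀ k : ℕ, ContinuousOn (fun w : ℂ => c i k * (psiF lam (x j) w *
        (w ^ ((k : ℕ) : ℤ) * Complex.exp (-(t : ℂ) * w)))) (Metric.sphere 0 R) := fun k =>
      continuousOn_const.mul ((continuousOn_psiF_sphere hpos hub hR (x j)).mul
        ((continuousOn_zpow_sphere hR0 _).mul (by fun_prop)))
    rw [Matrix.of_apply, eL_eq_psiMoment, psiMoment, Matrix.mul_apply,
      contourAvg_congr hR0.le (g := fun w => ∑ k : Fin (N + 1), c i k * (psiF lam (x j) w *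
        (w ^ ((k : ℕ) : ℤ) * Complex.exp (-(t : ℂ) * w)))), contourAvg_sum hR0.le
        (fun k _ => hcts (k : Fin (N + 1))), Finset.mul_sum]
    · refine Finset.sum_congr rfl fun k _ => ?_
      rw [contourAvg_const_mul, hA, hB, Matrix.of_apply, Matrix.of_apply, kerPsi, psiMoment]
      ring
    · intro w _
      rw [hc (N + 1) i w i.2, ← Fin.sum_univ_eq_sum_range fun k => c i k * w ^ k, Finset.sum_mul,
        Finset.mul_sum]
      refine Finset.sum_congr rfl fun k _ => ?_
      rw [zpow_natCast]
      ring
  have h2 : A.det = ∏ i : Fin (N + 1), ∏ m ∈ Finset.range i, -(lam m : ℂ)⁻¹ := by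
    rw [Matrix.det_of_isLowerTriangular A fun i k h => hc0 _ _ h]
    exact Finset.prod_congr rfl fun i _ => hc1 i
  have h3 : (Matrix.of fun i j : Fin (N + 1) => kerPsi lam R t ((N : ℤ) - (i : ℕ)) (x j))
      = B.submatrix Fin.revPerm id := by
    ext i j
    simp only [Matrix.of_apply, Matrix.submatrix_apply, hB, id, Fin.revPerm_apply]
    congr 1
    rw [Fin.val_rev]
    omega
  have h4 : (∏ i : Fin (N + 1), ((-1 : ℂ)) ^ (i : ℕ)) * ∏ i : Fin (N + 1), ((-1 : ℂ)) ^ (i : ℕ)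
      = 1 := by
    rw [← Finset.prod_mul_distrib]
    refine Finset.prod_eq_one fun i _ => ?_
    rw [← mul_pow]
    simp
  have h5 : A.det = ((hfun lam (N + 1) (fun i => (i : ℕ)) : ℝ) : ℂ) *
      ∏ i : Fin (N + 1), ((-1 : ℂ)) ^ (i : ℕ) := by
    rw [h2, hfun_packed, Complex.ofReal_prod, ← Finset.prod_mul_distrib]
    refine Finset.prod_congr rfl fun i _ => ?_
    rw [Finset.prod_neg, Finset.card_range, Complex.ofReal_prod, mul_comm]
    simp
  rw [h1, Matrix.det_mul, h3, Matrix.det_permute, sign_revPerm, h5]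
  ring

lemma dens_eq {lam : ℕ → ℝ} {M R : ℝ} (hpos : ∀ x, 0 < lam x) (hub : ∀ x, lam x ≤ M)
    (hR : M < R) (t : ℝ) (N : ℕ) {X : GTpat N} (hX : IsGT X) :
    dens lam R t N X
      = (Matrix.of fun i j : Fin (N + 1) => kerPsi lam R t ((N : ℤ) - (i : ℕ))
          (X (Fin.last N) j)).det *
        ∏ m : Fin N, ∏ i, (lam (X m.castSucc i) : ℂ)⁻¹ := by
  have h1 : ∀ n : Fin (N + 1), hfun lam ((n : ℕ) + 1) (X n) ≠ 0 := fun n =>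
    (hfun_pos hpos _ _ (hX.1 n)).ne'
  have h2 : ∏ m : Fin N, frakL lam ((m : ℕ) + 1) (X m.succ) (X m.castSucc)
      = (∏ m : Fin N, ∏ i, (lam (X m.castSucc i))⁻¹) *
        (hfun lam (N + 1) (X (Fin.last N)))⁻¹ := by
    have e1 : ∏ m : Fin N, frakL lam ((m : ℕ) + 1) (X m.succ) (X m.castSucc)
        = (∏ m : Fin N, ∏ i, (lam (X m.castSucc i))⁻¹) *
          ∏ m : Fin N, hfun lam ((m : ℕ) + 1) (X m.castSucc)
            / hfun lam ((m : ℕ) + 1 + 1) (X m.succ) := by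
      rw [← Finset.prod_mul_distrib]
      refine Finset.prod_congr rfl fun m _ => ?_
      rw [frakL, if_pos (hX.2 m)]
      simp only [mul_one]
      exact mul_comm _ _
    have e2 := Fin.prod_univ_succ fun n : Fin (N + 1) => hfun lam ((n : ℕ) + 1) (X n)
    have e3 := Fin.prod_univ_castSucc fun n : Fin (N + 1) => hfun lam ((n : ℕ) + 1) (X n)
    have e4 : hfun lam (((0 : Fin (N + 1)) : ℕ) + 1) (X 0) = 1 := hfun_one lam (X 0)
    have hne : ∏ m : Fin N, hfun lam ((m.succ : ℕ) + 1) (X m.succ) ≠ 0 :=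
      Finset.prod_ne_zero_iff.2 fun m _ => h1 _
    have hl : hfun lam (N + 1) (X (Fin.last N)) ≠ 0 := h1 (Fin.last N)
    rw [e4, one_mul] at e2
    rw [e2] at e3
    rw [e1, Finset.prod_div_distrib]
    congr 1
    change _ / ∏ m : Fin N, hfun lam ((m.succ : ℕ) + 1) (X m.succ) = _
    rw [e3]
    change (∏ m : Fin N, hfun lam ((m.castSucc : ℕ) + 1) (X m.castSucc)) / _ = _
    have hne' : ∏ m : Fin N, hfun lam ((m.castSucc : ℕ) + 1) (X m.castSucc) ≠ 0 :=
      Finset.prod_ne_zero_iff.2 fun m _ => h1 _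
    rw [← div_div, div_self hne', one_div]
    rfl
  have hd : ((hfun lam (N + 1) (fun i => (i : ℕ)) : ℝ) : ℂ) ≠ 0 := by
    exact_mod_cast (hfun_pos hpos (N + 1) _ fun i j h => h).ne'
  have hl : ((hfun lam (N + 1) (X (Fin.last N)) : ℝ) : ℂ) ≠ 0 := by
    exact_mod_cast h1 (Fin.last N)
  unfold _root_.dens frakP
  rw [det_eL hpos hub hR, h2]
  push_cast
  generalize (Matrix.of fun i j : Fin (N + 1) => kerPsi lam R t ((N : ℤ) - (i : ℕ))
          (X (Fin.last N) j)).det = D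
  change ((hfun lam (N + 1) (X (Fin.last N)) : ℝ) : ℂ) / _ * _ * _ = _
  field_simp

end TopLevel

section Nonnegativity

lemma hasDerivAt_contourAvg_mul_exp {R : ℝ} (hR : 0 ≤ R) {q : ℂ → ℂ}
    (hq : ContinuousOn q (Metric.sphere 0 R)) (t₀ : ℝ) :
    HasDerivAt (fun t : ℝ => contourAvg R fun w => q w * Complex.exp (-(t : ℂ) * w))
      (contourAvg R fun w => q w * (-w * Complex.exp (-(t₀ : ℂ) * w))) t₀ := by
  have hmem : ∀ θ, circleMap 0 R θ ∈ Metric.sphere (0 : ℂ) R := circleMap_mem_sphere 0 hR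
  have hqc : Continuous fun θ : ℝ => q (circleMap 0 R θ) :=
    hq.comp_continuous (continuous_circleMap 0 R) hmem
  have hc := continuous_circleMap 0 R
  simp only [contourAvg, circleIntegral, deriv_circleMap, smul_eq_mul]
  refine HasDerivAt.const_mul _ ?_
  refine (intervalIntegral.hasDerivAt_integral_of_dominated_loc_of_deriv_le
    (F := fun (t : ℝ) θ => circleMap 0 R θ * Complex.I *
      (q (circleMap 0 R θ) * Complex.exp (-(t : ℂ) * circleMap 0 R θ)))
    (F' := fun (t : ℝ) θ => circleMap 0 R θ * Complex.I *
      (q (circleMap 0 R θ) * (-circleMap 0 R θ * Complex.exp (-(t : ℂ) * circleMap 0 R θ))))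
    (bound := fun θ => ‖circleMap 0 R θ * Complex.I‖ *
      (‖q (circleMap 0 R θ)‖ * (R * Real.exp ((|t₀| + 1) * R))))
    (Metric.ball_mem_nhds t₀ one_pos) ?_ ?_ ?_ ?_ ?_ ?_).2
  · exact Filter.Eventually.of_forall fun t => Continuous.aestronglyMeasurable
      ((hc.mul continuous_const).mul (hqc.mul (by fun_prop)))
  · exact Continuous.intervalIntegrable
      ((hc.mul continuous_const).mul (hqc.mul (by fun_prop))) _ _
  · exact Continuous.aestronglyMeasurable
      ((hc.mul continuous_const).mul (hqc.mul (by fun_prop)))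
  · refine Filter.Eventually.of_forall fun θ _ t ht => ?_
    have hn : ‖circleMap 0 R θ‖ = R := by simpa using hmem θ
    have ht : |t| ≤ |t₀| + 1 := by
      rw [Metric.mem_ball, Real.dist_eq] at ht
      have := abs_sub_abs_le_abs_sub t t₀
      linarith
    rw [norm_mul, norm_mul (q _), norm_mul (-_), norm_neg, hn]
    gcongr
    refine (Complex.norm_exp_le_exp_norm _).trans (Real.exp_le_exp.2 ?_)
    rw [norm_mul, norm_neg, hn, Complex.norm_real, Real.norm_eq_abs]
    gcongr
  · exact Continuous.intervalIntegrable
      ((hc.mul continuous_const).norm.mul (hqc.norm.mul continuous_const)) _ _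
  · refine Filter.Eventually.of_forall fun θ _ t _ => ?_
    refine HasDerivAt.const_mul _ (HasDerivAt.const_mul _ ?_)
    have h1 : HasDerivAt (fun z : ℂ => Complex.exp (-z * circleMap 0 R θ))
        (Complex.exp (-(t : ℂ) * circleMap 0 R θ) * (-1 * circleMap 0 R θ)) (t : ℂ) :=
      (((hasDerivAt_id (t : ℂ)).neg).mul_const _).cexp
    exact h1.comp_ofReal.congr_deriv (by ring)

lemma hasDerivAt_eL {lam : ℕ → ℝ} {M R : ℝ} (hpos : ∀ x, 0 < lam x) (hub : ∀ x, lam x ≤ M)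
    (hR : M < R) (t : ℝ) (x y : ℕ) :
    HasDerivAt (fun t => eL lam R t x y) (-(lam y : ℂ) * eL lam R t x y
      + (if y = 0 then 0 else (lam (y - 1) : ℂ)) * eL lam R t x (y - 1)) t := by
  have hR0 : 0 < R := ((hpos 0).trans_le (hub 0)).trans hR
  have hp := (differentiable_pF lam x).continuous
  have hq : ∀ y, ContinuousOn (fun w => psiF lam y w * pF lam x w) (Metric.sphere 0 R) := fun y =>
    (continuousOn_psiF_sphere hpos hub hR y).mul hp.continuousOn
  have h1 := (hasDerivAt_contourAvg_mul_exp hR0.le (hq y) t).const_mul (-(1 / (lam y : ℂ)))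
  have hval : -(1 / (lam y : ℂ)) * (contourAvg R fun w =>
        psiF lam y w * pF lam x w * (-w * Complex.exp (-(t : ℂ) * w)))
      = -(lam y : ℂ) * eL lam R t x y
        + (if y = 0 then 0 else (lam (y - 1) : ℂ)) * eL lam R t x (y - 1) := by
    have hy0 : (lam y : ℂ) ≠ 0 := by exact_mod_cast (hpos y).ne'
    have hne : ∀ w : ℂ, ‖w‖ = R → (lam y : ℂ) - w ≠ 0 := fun w hw =>
      ofReal_sub_ne_zero_of_lt_norm (hpos y) (by rw [hw]; exact (hub y).trans_lt hR)
    have e1 : ∀ w : ℂ, ‖w‖ = R → psiF lam y w * pF lam x w * (-w * Complex.exp (-(t : ℂ) * w))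
        = -(lam y : ℂ) * (psiF lam y w * pF lam x w * Complex.exp (-(t : ℂ) * w)) +
          (lam y : ℂ) * ((if y = 0 then 1 else psiF lam (y - 1) w) * pF lam x w
            * Complex.exp (-(t : ℂ) * w)) := by
      intro w hw
      have hs : psiF lam y w * ((lam y : ℂ) - w)
          = (lam y : ℂ) * (if y = 0 then 1 else psiF lam (y - 1) w) := by
        have := hne w hw
        cases y with
        | zero =>
          simp only [psiF, zero_add, Finset.prod_range_one, if_true]
          field_simp
        | succ y =>
          rw [psiF, Finset.prod_range_succ, if_neg (Nat.succ_ne_zero y)]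
          simp only [Nat.add_sub_cancel, psiF]
          field_simp
      linear_combination (pF lam x w * Complex.exp (-(t : ℂ) * w)) * hs
    have c1 : ∀ y, ContinuousOn (fun w => psiF lam y w * pF lam x w * Complex.exp (-(t : ℂ) * w))
        (Metric.sphere 0 R) := fun y => (hq y).mul (by fun_prop)
    have c2 : ContinuousOn (fun w => (if y = 0 then 1 else psiF lam (y - 1) w) * pF lam x w
            * Complex.exp (-(t : ℂ) * w)) (Metric.sphere 0 R) := by
      split_ifs
      · fun_prop
      · exact c1 _
    have c3 : ContinuousOn (fun w => -(lam y : ℂ) *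
        (psiF lam y w * pF lam x w * Complex.exp (-(t : ℂ) * w))) (Metric.sphere 0 R) :=
      continuousOn_const.mul (c1 y)
    have c4 : ContinuousOn (fun w => (lam y : ℂ) * ((if y = 0 then 1 else psiF lam (y - 1) w) *
        pF lam x w * Complex.exp (-(t : ℂ) * w))) (Metric.sphere 0 R) :=
      continuousOn_const.mul c2
    have e2 : (contourAvg R fun w => (if y = 0 then 1 else psiF lam (y - 1) w) * pF lam x w
            * Complex.exp (-(t : ℂ) * w))
        = -(if y = 0 then 0 else (lam (y - 1) : ℂ)) * eL lam R t x (y - 1) := by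
      split_ifs with h
      · rw [neg_zero, zero_mul]
        have := differentiable_pF lam x
        exact contourAvg_eq_zero_of_differentiable hR0.le (by fun_prop)
      · have : (lam (y - 1) : ℂ) ≠ 0 := by exact_mod_cast (hpos _).ne'
        change _ = -(lam (y - 1) : ℂ) * (-(1 / (lam (y - 1) : ℂ)) * contourAvg R _)
        field_simp
    have e3 : eL lam R t x y = -(1 / (lam y : ℂ)) * contourAvg R fun w =>
        psiF lam y w * pF lam x w * Complex.exp (-(t : ℂ) * w) := rfl
    rw [contourAvg_congr hR0.le e1, contourAvg_add hR0.le c3 c4, contourAvg_const_mul,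
      contourAvg_const_mul, e2, e3]
    field_simp
    ring
  rw [← hval]
  exact h1

lemma eL_zero {lam : ℕ → ℝ} {M R : ℝ} (hpos : ∀ x, 0 < lam x) (hub : ∀ x, lam x ≤ M)
    (hR : M < R) (x y : ℕ) : eL lam R 0 x y = if x = y then 1 else 0 := by
  have hy0 : (lam y : ℂ) ≠ 0 := by exact_mod_cast (hpos y).ne'
  have : eL lam R 0 x y = -(1 / (lam y : ℂ)) * contourAvg R fun w =>
      psiF lam y w * pF lam x w := by
    simp [eL, contourAvg]
  rw [this, contourAvg_psiF_mul_pF hpos hub hR]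
  split_ifs
  · field_simp
  · simp

lemma hasDerivAt_det {n : Type*} [Fintype n] [DecidableEq n] {A : ℝ → Matrix n n ℂ}
    {A' : Matrix n n ℂ} {t : ℝ} (h : ∀ i j, HasDerivAt (fun t => A t i j) (A' i j) t) :
    HasDerivAt (fun t => (A t).det)
      (∑ j, ((A t).updateCol j fun i => A' i j).det) t := by
  simp only [Matrix.det_apply']
  rw [Finset.sum_comm]
  refine HasDerivAt.fun_sum fun σ _ => ?_
  rw [← Finset.mul_sum]
  refine HasDerivAt.const_mul _ ?_
  convert HasDerivAt.fun_finsetProd (u := Finset.univ) fun i _ => h (σ i) i using 1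
  refine Finset.sum_congr rfl fun j _ => ?_
  rw [← Finset.prod_erase_mul _ _ (Finset.mem_univ j), smul_eq_mul]
  congr 1
  · refine Finset.prod_congr rfl fun i hi => ?_
    rw [Matrix.updateCol_ne (Finset.ne_of_mem_erase hi)]
  · rw [Matrix.updateCol_self]

lemma nonneg_of_hasDerivAt_nonneg {G G' : ℝ → ℂ} (h : ∀ t, HasDerivAt G (G' t) t)
    (hG' : ∀ t, 0 ≤ t → 0 ≤ G' t) (h0 : 0 ≤ G 0) {t : ℝ} (ht : 0 ≤ t) : 0 ≤ G t := by
  have hmono : ∀ L : ℂ →L[ℝ] ℝ, (∀ z : ℂ, 0 ≤ z → 0 ≤ L z) → 0 ≤ L (G t) := by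
    intro L hL
    have hd : ∀ t, HasDerivAt (fun t => L (G t)) (L (G' t)) t := fun t =>
      L.hasFDerivAt.comp_hasDerivAt t (h t)
    have := monotoneOn_of_deriv_nonneg (convex_Ici (0 : ℝ)) (f := fun t => L (G t))
      (fun t _ => (hd t).continuousAt.continuousWithinAt)
      (fun t _ => (hd t).differentiableAt.differentiableWithinAt) (fun t ht' => by
        rw [(hd t).deriv]
        exact hL _ (hG' t (interior_subset ht')))
    exact (hL _ h0).trans (this Set.self_mem_Ici ht ht)
  rw [Complex.nonneg_iff]
  refine ⟨hmono Complex.reCLM fun z hz => (Complex.nonneg_iff.1 hz).1, le_antisymm ?_ ?_⟩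
  · exact hmono Complex.imCLM fun z hz => (Complex.nonneg_iff.1 hz).2.le
  · have := hmono (-Complex.imCLM) fun z hz => by simp [← (Complex.nonneg_iff.1 hz).2]
    simpa using this

lemma det_eL_zero_nonneg {lam : ℕ → ℝ} {M R : ℝ} (hpos : ∀ x, 0 < lam x) (hub : ∀ x, lam x ≤ M)
    (hR : M < R) {n : ℕ} {y : Fin n → ℕ} (hy : StrictMono y) :
    0 ≤ (Matrix.of fun i j : Fin n => eL lam R 0 (i : ℕ) (y j)).det := by
  simp only [eL_zero hpos hub hR]
  by_cases h : ∃ j, n ≤ y j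
  · obtain ⟨j, hj⟩ := h
    rw [Matrix.det_eq_zero_of_column_eq_zero j]
    intro i
    rw [Matrix.of_apply, if_neg (by omega)]
  · push Not at h
    have hf : StrictMono fun j : Fin n => (⟨y j, h j⟩ : Fin n) := fun i j hij => hy hij
    have hid : ∀ j : Fin n, y j = j := fun j =>
      congrArg Fin.val (le_antisymm hf.apply_le hf.le_apply)
    have : (Matrix.of fun i j : Fin n => if (i : ℕ) = y j then (1 : ℂ) else 0) = 1 := by
      ext i j
      rw [Matrix.of_apply, hid, Matrix.one_apply]
      exact if_congr Fin.ext_iff.symm rfl rfl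
    rw [this, Matrix.det_one]
    exact zero_le_one

/-- The forward equation for the determinants of transition probabilities. -/
lemma hasDerivAt_det_eL {lam : ℕ → ℝ} {M R : ℝ} (hpos : ∀ x, 0 < lam x) (hub : ∀ x, lam x ≤ M)
    (hR : M < R) (t : ℝ) {n : ℕ} (x y : Fin n → ℕ) :
    HasDerivAt (fun t => (Matrix.of fun i j : Fin n => eL lam R t (x i) (y j)).det)
      (-(∑ j, (lam (y j) : ℂ)) * (Matrix.of fun i j : Fin n => eL lam R t (x i) (y j)).det
        + ∑ j, (if y j = 0 then 0 else (lam (y j - 1) : ℂ)) *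
          (Matrix.of fun i k : Fin n => eL lam R t (x i) (Function.update y j (y j - 1) k)).det)
      t := by
  convert hasDerivAt_det (A := fun t => Matrix.of fun i j : Fin n => eL lam R t (x i) (y j))
    (A' := Matrix.of fun i j => -(lam (y j) : ℂ) * eL lam R t (x i) (y j)
      + (if y j = 0 then 0 else (lam (y j - 1) : ℂ)) * eL lam R t (x i) (y j - 1))
    (fun i j => hasDerivAt_eL hpos hub hR t (x i) (y j)) using 1
  rw [← Finset.sum_neg_distrib, Finset.sum_mul, ← Finset.sum_add_distrib]
  refine Finset.sum_congr rfl fun j _ => ?_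
  have hcol : (fun i => (Matrix.of fun i j => -(lam (y j) : ℂ) * eL lam R t (x i) (y j)
      + (if y j = 0 then 0 else (lam (y j - 1) : ℂ)) * eL lam R t (x i) (y j - 1) :
        Matrix (Fin n) (Fin n) ℂ) i j)
      = (-(lam (y j) : ℂ)) • (fun i => eL lam R t (x i) (y j))
        + (if y j = 0 then 0 else (lam (y j - 1) : ℂ)) • fun i => eL lam R t (x i) (y j - 1) := by
    funext i
    simp only [Matrix.of_apply, Pi.add_apply, Pi.smul_apply, smul_eq_mul]
  rw [hcol, Matrix.det_updateCol_add, Matrix.det_updateCol_smul, Matrix.det_updateCol_smul]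
  congr 2
  · congr 1
    exact (Matrix.updateCol_eq_self _ j).symm
  · congr 1
    ext i k
    by_cases hk : k = j
    · subst hk
      simp
    · simp [hk]

lemma det_eL_nonneg {lam : ℕ → ℝ} {M R : ℝ} (hpos : ∀ x, 0 < lam x) (hub : ∀ x, lam x ≤ M)
    (hR : M < R) {n : ℕ} : ∀ (S : ℕ) (y : Fin n → ℕ), StrictMono y → ∑ j, y j = S →
      ∀ t : ℝ, 0 ≤ t → 0 ≤ (Matrix.of fun i j : Fin n => eL lam R t (i : ℕ) (y j)).det := by
  intro S
  induction S using Nat.strong_induction_on with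
  | _ S ih =>
    intro y hy hS t ht
    set F : ℝ → ℂ := fun t => (Matrix.of fun i j : Fin n => eL lam R t (i : ℕ) (y j)).det with hF
    set c : ℝ := ∑ j, lam (y j) with hc
    have hterm : ∀ (j : Fin n) (t : ℝ), 0 ≤ t → 0 ≤ (if y j = 0 then 0 else (lam (y j - 1) : ℂ)) *
        (Matrix.of fun i k : Fin n =>
          eL lam R t (i : ℕ) (Function.update y j (y j - 1) k)).det := by
      intro j t ht
      split_ifs with h0
      · simp
      refine mul_nonneg (by exact_mod_cast (hpos _).le) ?_
      have hle : ∀ k, Function.update y j (y j - 1) k ≤ y k := by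
        intro k
        by_cases hk : k = j
        · subst hk; simp
        · simp [hk]
      have hm : Monotone (Function.update y j (y j - 1)) := by
        intro a b hab
        rcases hab.eq_or_lt with rfl | hab
        · exact le_rfl
        have h1 := hle a
        have h2 := hy hab
        by_cases hb : b = j
        · subst hb
          rw [Function.update_self]
          omega
        · rw [Function.update_of_ne hb]
          omega
      by_cases hinj : Function.Injective (Function.update y j (y j - 1))
      · refine ih _ ?_ _ (hm.strictMono_of_injective hinj) rfl t ht
        rw [← hS]
        refine Finset.sum_lt_sum (fun k _ => hle k) ⟨j, Finset.mem_univ j, ?_⟩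
        rw [Function.update_self]
        omega
      · rw [Function.not_injective_iff] at hinj
        obtain ⟨a, b, hab, hne⟩ := hinj
        rw [Matrix.det_zero_of_column_eq hne fun i => by
          rw [Matrix.of_apply, Matrix.of_apply, hab]]
    have hd : ∀ t : ℝ, HasDerivAt (fun t : ℝ => ((Real.exp (c * t) : ℝ) : ℂ) * F t)
        (((Real.exp (c * t) : ℝ) : ℂ) * ∑ j, (if y j = 0 then 0 else (lam (y j - 1) : ℂ)) *
        (Matrix.of fun i k : Fin n =>
          eL lam R t (i : ℕ) (Function.update y j (y j - 1) k)).det) t := by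
      intro t
      have h1 : HasDerivAt (fun t : ℝ => Real.exp (c * t)) (Real.exp (c * t) * (c * 1)) t :=
        ((hasDerivAt_id t).const_mul c).exp
      refine (h1.ofReal_comp.mul
        (hasDerivAt_det_eL hpos hub hR t (fun i : Fin n => (i : ℕ)) y)).congr_deriv ?_
      rw [hc]
      push_cast
      ring
    have h := nonneg_of_hasDerivAt_nonneg hd (fun t ht => mul_nonneg
      (by exact_mod_cast (Real.exp_pos _).le) (Finset.sum_nonneg fun j _ => hterm j t ht))
      (by simpa using det_eL_zero_nonneg hpos hub hR hy) ht
    have hinv : F t = ((Real.exp (-(c * t)) : ℝ) : ℂ) * (((Real.exp (c * t) : ℝ) : ℂ) * F t) := by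
      rw [← mul_assoc, ← Complex.ofReal_mul, ← Real.exp_add]
      simp
    change 0 ≤ F t
    rw [hinv]
    exact mul_nonneg (by exact_mod_cast (Real.exp_pos _).le) h

lemma det_kerPsi_nonneg {lam : ℕ → ℝ} {M R : ℝ} (hpos : ∀ x, 0 < lam x) (hub : ∀ x, lam x ≤ M)
    (hR : M < R) {t : ℝ} (ht : 0 ≤ t) {N : ℕ} {x : Fin (N + 1) → ℕ} (hx : StrictMono x) :
    0 ≤ (Matrix.of fun i j : Fin (N + 1) => kerPsi lam R t ((N : ℤ) - (i : ℕ)) (x j)).det := by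
  have h := det_eL_nonneg hpos hub hR _ x hx rfl t ht
  have hp := hfun_pos hpos (N + 1) (fun i => (i : ℕ)) fun i j h => h
  have hne : ((hfun lam (N + 1) (fun i => (i : ℕ)) : ℝ) : ℂ) ≠ 0 := by exact_mod_cast hp.ne'
  rw [det_eL hpos hub hR] at h
  have h2 := mul_nonneg (show (0 : ℂ) ≤ (((hfun lam (N + 1) (fun i => (i : ℕ)))⁻¹ : ℝ) : ℂ) by
    exact_mod_cast (inv_pos.2 hp).le) h
  rwa [← mul_assoc, Complex.ofReal_inv, inv_mul_cancel₀ hne, one_mul] at h2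

lemma dens_nonneg {lam : ℕ → ℝ} {M R : ℝ} (hpos : ∀ x, 0 < lam x) (hub : ∀ x, lam x ≤ M)
    (hR : M < R) {t : ℝ} (ht : 0 ≤ t) {N : ℕ} {X : GTpat N} (hX : IsGT X) :
    0 ≤ dens lam R t N X := by
  rw [dens_eq hpos hub hR t N hX]
  refine mul_nonneg (det_kerPsi_nonneg hpos hub hR ht (hX.1 (Fin.last N)))
    (Finset.prod_nonneg fun m _ => Finset.prod_nonneg fun i _ => ?_)
  rw [← Complex.ofReal_inv]
  exact_mod_cast (inv_pos.2 (hpos _)).le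

end Nonnegativity

section LevelSums

/-- Iterated weighted partial sums, with initial values prescribed by `κ` and weight `w l` at
level `l`. -/
noncomputable def levelFun (κ : ℤ → ℂ) (w : ℕ → ℕ → ℂ) : ℕ → ℕ → ℕ → ℂ
  | 0, i, _ => κ (0 - (i : ℤ))
  | l + 1, i, u => κ ((l + 1 : ℕ) - (i : ℤ)) - ∑ y ∈ Finset.range u, levelFun κ w l i y * w l y

lemma levelFun_of_lt {κ : ℤ → ℂ} (hκ : ∀ m < 0, κ m = 0) (w : ℕ → ℕ → ℂ) {l i : ℕ} (h : l < i)
    (u : ℕ) : levelFun κ w l i u = 0 := by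
  induction l generalizing u with
  | zero => exact hκ _ (by omega)
  | succ l ih =>
    rw [levelFun, hκ _ (by omega), Finset.sum_eq_zero fun y _ => by rw [ih (by omega), zero_mul],
      sub_zero]

lemma levelFun_self {κ : ℤ → ℂ} (hκ : ∀ m < 0, κ m = 0) (hκ0 : κ 0 = 1) (w : ℕ → ℕ → ℂ) (l u : ℕ) :
    levelFun κ w l l u = 1 := by
  cases l with
  | zero => simp [levelFun, hκ0]
  | succ l =>
    rw [levelFun, Finset.sum_eq_zero fun y _ => by rw [levelFun_of_lt hκ w (by omega), zero_mul],
      sub_self, hκ0, sub_zero]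

lemma sum_piFinset_det {n : ℕ} (F : Fin n → ℕ → ℂ) (S : Fin n → Finset ℕ) :
    ∑ y ∈ Fintype.piFinset S, (Matrix.of fun i j => F i (y j)).det
      = (Matrix.of fun i j => ∑ u ∈ S j, F i u).det := by
  have h := (Matrix.detRowAlternating (n := Fin n) (R := ℂ)).toMultilinearMap.map_sum_finset
    (fun j u => fun i => F i u) S
  rw [← Matrix.det_transpose]
  trans (Matrix.detRowAlternating (n := Fin n) (R := ℂ)).toMultilinearMap
    fun j => ∑ u ∈ S j, fun i => F i u
  · rw [h]
    refine Finset.sum_congr rfl fun y _ => ?_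
    rw [← Matrix.det_transpose]
    rfl
  · change Matrix.det _ = _
    congr 1
    ext j i
    simp

lemma sum_det_interlace {n : ℕ} (F : Fin n → ℕ → ℂ) (c : Fin n → ℂ) {x : Fin (n + 1) → ℕ}
    (hx : Monotone x) :
    ∑ y ∈ Fintype.piFinset (fun j : Fin n => Finset.Ico (x j.castSucc) (x j.succ)),
        (Matrix.of fun i j => F i (y j)).det
      = (Matrix.of fun (i j : Fin (n + 1)) => Fin.lastCases (motive := fun _ => ℂ) 1
          (fun i => c i - ∑ u ∈ Finset.range (x j), F i u) i).det := by
  rw [sum_piFinset_det]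
  set H : Fin n → Fin (n + 1) → ℂ := fun i j => c i - ∑ u ∈ Finset.range (x j), F i u with hH
  set B : Matrix (Fin (n + 1)) (Fin (n + 1)) ℂ := Matrix.of fun i j =>
    Fin.cases (motive := fun _ => ℂ) (Fin.lastCases (motive := fun _ => ℂ) 1 (fun i => H i 0) i)
      (fun j => Fin.lastCases (motive := fun _ => ℂ) 0
        (fun i => -∑ u ∈ Finset.Ico (x j.castSucc) (x j.succ), F i u) i) j with hB
  have hAB := Matrix.det_eq_of_forall_col_eq_smul_add_pred
    (A := Matrix.of fun (i j : Fin (n + 1)) => Fin.lastCases (motive := fun _ => ℂ) 1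
      (fun i => H i j) i) (B := B) (fun _ => 1) (fun i => by
        induction i using Fin.lastCases <;> simp [hB]) (fun i j => by
        induction i using Fin.lastCases with
        | last => simp [hB]
        | cast i =>
          simp only [hB, hH, Matrix.of_apply, Fin.cases_succ, Fin.lastCases_castSucc]
          rw [Finset.sum_Ico_eq_sub _ (hx Fin.castSucc_lt_succ.le)]
          ring)
  rw [hAB, Matrix.det_succ_row B (Fin.last n), Finset.sum_eq_single 0]
  · have : B.submatrix (Fin.last n).succAbove (Fin.succAbove 0) = -(Matrix.of fun i j : Fin n =>
        ∑ u ∈ Finset.Ico (x j.castSucc) (x j.succ), F i u) := by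
      ext i j
      simp [hB]
    rw [this, Matrix.det_neg]
    simp only [hB, Matrix.of_apply, Fin.cases_zero, Fin.lastCases_last, Fin.val_last, Fin.val_zero,
      Fintype.card_fin, add_zero, mul_one, ← mul_assoc, ← mul_pow]
    norm_num
  · intro j _ hj
    obtain ⟨j, rfl⟩ := Fin.exists_succ_eq.2 hj
    simp [hB]
  · simp

lemma isGT_zero (X : GTpat 0) : IsGT X :=
  ⟨Fin.forall_fin_one.2 fun a b h => absurd h (by
    have : Subsingleton (Fin (((0 : Fin 1) : ℕ) + 1)) := inferInstanceAs (Subsingleton (Fin 1))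
    simp [Subsingleton.elim a b]), fun m => m.elim0⟩

/-- Adding a top level to a Gelfand–Tsetlin pattern. -/
def snocGT (l : ℕ) : (Fin (l + 2) → ℕ) × GTpat l ≃ GTpat (l + 1) :=
  Fin.snocEquiv fun n : Fin (l + 2) => Fin ((n : ℕ) + 1) → ℕ

lemma snocGT_last (l : ℕ) (p : (Fin (l + 2) → ℕ) × GTpat l) :
    snocGT l p (Fin.last (l + 1)) = p.1 :=
  Fin.snoc_last (α := fun n : Fin (l + 2) => Fin ((n : ℕ) + 1) → ℕ) p.1 p.2

lemma snocGT_castSucc (l : ℕ) (p : (Fin (l + 2) → ℕ) × GTpat l) (m : Fin (l + 1)) :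
    snocGT l p m.castSucc = p.2 m :=
  Fin.snoc_castSucc (α := fun n : Fin (l + 2) => Fin ((n : ℕ) + 1) → ℕ) p.1 p.2 m

lemma isGT_snocGT_iff (l : ℕ) (p : (Fin (l + 2) → ℕ) × GTpat l) :
    IsGT (snocGT l p) ↔ StrictMono p.1 ∧ IsGT p.2 ∧ Interlace (p.2 (Fin.last l)) p.1 := by
  have h1 : (∀ n, StrictMono (snocGT l p n)) ↔ (∀ n, StrictMono (p.2 n)) ∧ StrictMono p.1 := by
    rw [Fin.forall_fin_succ', snocGT_last]
    exact and_congr_left fun _ => forall_congr' fun m => by rw [snocGT_castSucc]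
  have h2 : (∀ m : Fin (l + 1), Interlace (snocGT l p m.castSucc) (snocGT l p m.succ))
      ↔ (∀ m : Fin l, Interlace (p.2 m.castSucc) (p.2 m.succ))
        ∧ Interlace (p.2 (Fin.last l)) p.1 := by
    rw [Fin.forall_fin_succ']
    refine and_congr (forall_congr' fun m => ?_) ?_
    · rw [snocGT_castSucc]
      exact iff_of_eq (congrArg (Interlace (p.2 m.castSucc)) (snocGT_castSucc l p m.succ))
    · rw [snocGT_castSucc]
      exact iff_of_eq (congrArg (Interlace (p.2 (Fin.last l))) (snocGT_last l p))
  rw [IsGT, h1, h2, IsGT]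
  tauto

/-- The product of the weights of all entries below the top level. -/
noncomputable def levelWeight (w : ℕ → ℕ → ℂ) {l : ℕ} (X : GTpat l) : ℂ :=
  ∏ m : Fin l, ∏ j, w m (X m.castSucc j)

lemma levelWeight_snocGT (w : ℕ → ℕ → ℂ) (l : ℕ) (p : (Fin (l + 2) → ℕ) × GTpat l) :
    levelWeight w (snocGT l p) = levelWeight w p.2 * ∏ j, w l (p.2 (Fin.last l) j) := by
  rw [levelWeight, Fin.prod_univ_castSucc, levelWeight]
  refine congrArg₂ _ (Finset.prod_congr rfl fun m _ => ?_) ?_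
  · exact congrArg (fun y : Fin ((m : ℕ) + 1) → ℕ => ∏ j, w m (y j))
      (snocGT_castSucc l p m.castSucc)
  · exact congrArg (fun y : Fin (l + 1) → ℕ => ∏ j, w l (y j)) (snocGT_castSucc l p (Fin.last l))

open Classical in
lemma hasSum_levelWeight {κ : ℤ → ℂ} (hκ : ∀ m < 0, κ m = 0) (hκ0 : κ 0 = 1) (w : ℕ → ℕ → ℂ)
    (l : ℕ) {x : Fin (l + 1) → ℕ} (hx : StrictMono x) :
    HasSum (fun X : GTpat l => if IsGT X ∧ X (Fin.last l) = x then levelWeight w X else 0)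
      (Matrix.of fun i j : Fin (l + 1) => levelFun κ w l i (x j)).det := by
  induction l with
  | zero =>
    have hX : ∀ X : GTpat 0, X (Fin.last 0) = x ↔ X = Fin.cases x fun i => i.elim0 := by
      intro X
      refine ⟨fun h => funext (Fin.forall_fin_one.2 h), fun h => ?_⟩
      rw [h]
      rfl
    have h1 : (Matrix.of fun i j : Fin (0 + 1) => levelFun κ w 0 i (x j)).det = 1 := by
      exact (Matrix.det_fin_one _).trans (levelFun_self hκ hκ0 w 0 (x 0))
    rw [h1]
    have h2 : (fun X : GTpat 0 => if IsGT X ∧ X (Fin.last 0) = x then levelWeight w X else 0)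
        = fun X => if X = Fin.cases x fun i => i.elim0 then 1 else 0 := by
      funext X
      rw [← hX]
      simp [isGT_zero, levelWeight]
    rw [h2]
    exact hasSum_ite_eq _ _
  | succ l ih =>
    have hinj : Function.Injective fun X : GTpat l => snocGT l (x, X) :=
      (snocGT l).injective.comp fun X Y h => (Prod.mk.inj h).2
    rw [← hinj.hasSum_iff]
    · set S : Fin (l + 1) → Finset ℕ := fun j => Finset.Ico (x j.castSucc) (x j.succ) with hS
      have hmem : ∀ y : Fin (l + 1) → ℕ, y ∈ Fintype.piFinset S ↔ Interlace y x := fun y => by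
        simp [hS, Interlace]
      have hsum := hasSum_sum (s := Fintype.piFinset S) fun y hy =>
        (ih (strictMono_of_interlace ((hmem y).1 hy))).mul_right (∏ j, w l (y j))
      have hval : ∑ y ∈ Fintype.piFinset S,
            (Matrix.of fun i j : Fin (l + 1) => levelFun κ w l i (y j)).det * ∏ j, w l (y j)
          = (Matrix.of fun i j : Fin (l + 1 + 1) => levelFun κ w (l + 1) i (x j)).det := by
        have h := sum_det_interlace (fun (i : Fin (l + 1)) u => levelFun κ w l i u * w l u)
          (fun i => κ ((l + 1 : ℕ) - ((i : ℕ) : ℤ))) hx.monotone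
        refine (Finset.sum_congr rfl fun y _ => ?_).trans (h.trans ?_)
        · rw [mul_comm, ← Matrix.det_mul_row]
          simp only [Matrix.of_apply, mul_comm (w l _)]
        · congr 1
          ext i j
          induction i using Fin.lastCases with
          | last =>
            simp only [Matrix.of_apply, Fin.lastCases_last, Fin.val_last]
            rw [levelFun_self hκ hκ0]
          | cast i =>
            simp only [Matrix.of_apply, Fin.lastCases_castSucc, Fin.val_castSucc]
            rw [levelFun]
      rw [hval] at hsum
      have hfun : ((fun Y : GTpat (l + 1) => if IsGT Y ∧ Y (Fin.last (l + 1)) = x then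
            levelWeight w Y else 0) ∘ fun X : GTpat l => snocGT l (x, X))
          = fun X => ∑ y ∈ Fintype.piFinset S,
            (if IsGT X ∧ X (Fin.last l) = y then levelWeight w X else 0) * ∏ j, w l (y j) := by
        funext X
        simp only [Function.comp_apply, isGT_snocGT_iff, snocGT_last, levelWeight_snocGT, hx,
          true_and, ite_and, ite_mul, zero_mul]
        by_cases hX : IsGT X
        · simp only [hX, if_true]
          rw [Finset.sum_ite_eq]
          exact if_congr (hmem _).symm rfl rfl
        · simp [hX]
      rw [hfun]
      exact hsum
    · intro Y hY
      rw [if_neg]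
      rintro ⟨-, h⟩
      refine hY ⟨((snocGT l).symm Y).2, ?_⟩
      have h2 := snocGT_last l ((snocGT l).symm Y)
      rw [Equiv.apply_symm_apply] at h2
      simp only
      rw [← h, h2]
      simp

end LevelSums

section PerturbedLevels

variable {ι : Type*} [Fintype ι]

/-- The total mass placed by `a` on the position `u` at level `l`. -/
noncomputable def levelMass (lev pos : ι → ℕ) (a : ι → ℂ) (l u : ℕ) : ℂ :=
  ∑ z, if lev z = l ∧ pos z = u then a z else 0

/-- The functions `levelFun` for the weights `1 / lam u` perturbed at finitely many sites. -/
noncomputable def pertPhi (lam : ℕ → ℝ) (r t : ℝ) (lev pos : ι → ℕ) (a : ι → ℂ) :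
    ℕ → ℕ → ℕ → ℂ :=
  levelFun (kerPhiZero r t) fun l u => (1 + levelMass lev pos a l u) / lam u

variable {lam : ℕ → ℝ} {s M R r : ℝ}

lemma pertPhi_mul_one_add_of_expansion (hpos : ∀ x, 0 < lam x) (hub : ∀ x, lam x ≤ M) (hR : M < R)
    (t : ℝ) (lev pos : ι → ℕ) (a : ι → ℂ) {l i u : ℕ}
    (h : pertPhi lam r t lev pos a l i u = kerPhi lam r t ((l : ℤ) - i) u
      - ∑ z, if lev z < l then pertPhi lam r t lev pos a (lev z) i (pos z) * a z *
          kerTrans lam R (l - lev z) (pos z) u else 0) :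
    pertPhi lam r t lev pos a l i u * (1 + levelMass lev pos a l u)
      = kerPhi lam r t ((l : ℤ) - i) u
      - ∑ z, if lev z ≤ l then pertPhi lam r t lev pos a (lev z) i (pos z) * a z *
          kerTrans lam R (l - lev z) (pos z) u else 0 := by
  rw [mul_add, mul_one, levelMass, Finset.mul_sum]
  nth_rw 1 [h]
  rw [sub_add, sub_right_inj, ← Finset.sum_sub_distrib]
  refine Finset.sum_congr rfl fun z _ => ?_
  rcases lt_trichotomy (lev z) l with hz | hz | hz
  · simp [hz, hz.le, hz.ne]
  · subst hz
    rw [Nat.sub_self, kerTrans_zero hpos hub hR]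
    by_cases hu : u = pos z
    · subst hu
      simp
    · simp [hu, Ne.symm hu]
  · simp [hz.not_gt, hz.not_ge, hz.ne']

lemma pertPhi_eq (hpos : ∀ x, 0 < lam x) (hub : ∀ x, lam x ≤ M) (hR : M < R) (hr : 0 < r)
    (t : ℝ) (lev pos : ι → ℕ) (a : ι → ℂ) (l i u : ℕ) :
    pertPhi lam r t lev pos a l i u = kerPhi lam r t ((l : ℤ) - i) u
      - ∑ z, if lev z < l then pertPhi lam r t lev pos a (lev z) i (pos z) * a z *
          kerTrans lam R (l - lev z) (pos z) u else 0 := by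
  induction l generalizing u with
  | zero =>
    have h := kerPhi_succ hpos hr t (0 - (i : ℤ) - 1) u
    rw [sub_add_cancel, Finset.sum_eq_zero fun y _ => by
      rw [kerPhi_of_neg lam hr t (by omega), zero_div], sub_zero] at h
    have h0 : pertPhi lam r t lev pos a 0 i u = kerPhiZero r t (0 - (i : ℤ)) := rfl
    rw [h0, ← h]
    simp
  | succ l ih =>
    have h := kerPhi_succ hpos hr t ((l : ℤ) - i) u
    rw [show (l : ℤ) - i + 1 = ((l + 1 : ℕ) : ℤ) - i by push_cast; ring] at h
    have hy : ∀ y, pertPhi lam r t lev pos a l i y * ((1 + levelMass lev pos a l y) / lam y)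
        = kerPhi lam r t ((l : ℤ) - i) y / lam y
          - ∑ z, if lev z ≤ l then pertPhi lam r t lev pos a (lev z) i (pos z) * a z *
            (kerTrans lam R (l - lev z) (pos z) y / lam y) else 0 := fun y => by
      rw [← mul_div_assoc, pertPhi_mul_one_add_of_expansion hpos hub hR t lev pos a (ih y), sub_div,
        Finset.sum_div]
      simp only [ite_div, zero_div, mul_div_assoc]
    have h1 : pertPhi lam r t lev pos a (l + 1) i u = kerPhiZero r t ((l + 1 : ℕ) - (i : ℤ))
        - ∑ y ∈ Finset.range u,
          pertPhi lam r t lev pos a l i y * ((1 + levelMass lev pos a l y) / lam y) := rfl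
    rw [h1, Finset.sum_congr rfl fun y _ => hy y, Finset.sum_sub_distrib, ← sub_add, ← h,
      Finset.sum_comm, sub_eq_add_neg (kerPhi lam r t _ u), ← Finset.sum_neg_distrib]
    congr 1
    refine Finset.sum_congr rfl fun z _ => ?_
    by_cases hz : lev z ≤ l
    · simp only [hz, Nat.lt_succ_of_le hz, if_true]
      rw [Nat.succ_sub hz, kerTrans_succ hpos hub hR, ← Finset.mul_sum]
      ring
    · simp [hz]

lemma pertPhi_mul_one_add (hpos : ∀ x, 0 < lam x) (hub : ∀ x, lam x ≤ M) (hR : M < R) (hr : 0 < r)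
    (t : ℝ) (lev pos : ι → ℕ) (a : ι → ℂ) (l i u : ℕ) :
    pertPhi lam r t lev pos a l i u * (1 + levelMass lev pos a l u)
      = kerPhi lam r t ((l : ℤ) - i) u
      - ∑ z, if lev z ≤ l then pertPhi lam r t lev pos a (lev z) i (pos z) * a z *
          kerTrans lam R (l - lev z) (pos z) u else 0 :=
  pertPhi_mul_one_add_of_expansion hpos hub hR t lev pos a
    (pertPhi_eq hpos hub hR hr t lev pos a l i u)

lemma hasSum_pertPhi_mul_kerPsi (hs : 0 < s) (hlb : ∀ x, s ≤ lam x) (hub : ∀ x, lam x ≤ M)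
    (hR : M < R) (hr : 0 < r) (t : ℝ) {N : ℕ} {lev pos : ι → ℕ} (hlev : ∀ z, lev z ≤ N)
    (a : ι → ℂ) {i j : ℕ} (hi : i ≤ N) (hj : j ≤ N) :
    HasSum (fun x => pertPhi lam r t lev pos a N i x *
        ((1 + levelMass lev pos a N x) * kerPsi lam R t ((N : ℤ) - j) x))
      ((if i = j then 1 else 0) + ∑ z, pertPhi lam r t lev pos a (lev z) i (pos z) * a z *
        kerPsi lam R t ((lev z : ℤ) - j) (pos z)) := by
  have hpos : ∀ x, 0 < lam x := fun x => hs.trans_le (hlb x)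
  have h1 := hasSum_kerPhi_mul_kerPsi hs hlb hub hR hr t (N - i) (N - j)
  have h2 := hasSum_sum (s := Finset.univ) fun (z : ι) _ =>
    (hasSum_kerTrans_mul_kerPsi hs hlb hub hR t (N - lev z) (pos z) (N - j)).mul_left
      (pertPhi lam r t lev pos a (lev z) i (pos z) * a z)
  have h3 := h1.sub h2
  have hfun : (fun x => pertPhi lam r t lev pos a N i x *
        ((1 + levelMass lev pos a N x) * kerPsi lam R t ((N : ℤ) - j) x))
      = fun x => kerPhi lam r t ((N - i : ℕ) : ℤ) x * kerPsi lam R t ((N - j : ℕ) : ℤ) x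
        - ∑ z, pertPhi lam r t lev pos a (lev z) i (pos z) * a z *
          (kerTrans lam R (N - lev z) (pos z) x * kerPsi lam R t ((N - j : ℕ) : ℤ) x) := by
    funext x
    rw [← mul_assoc, pertPhi_mul_one_add hpos hub hR hr, sub_mul, Finset.sum_mul, Nat.cast_sub hi,
      Nat.cast_sub hj]
    simp only [hlev, if_true, mul_assoc]
  have hval : (if i = j then (1 : ℂ) else 0) + ∑ z, pertPhi lam r t lev pos a (lev z) i (pos z) *
        a z * kerPsi lam R t ((lev z : ℤ) - j) (pos z)
      = (if N - i = N - j then 1 else 0) - ∑ z, pertPhi lam r t lev pos a (lev z) i (pos z) * a z *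
        -kerPsi lam R t (((N - j : ℕ) : ℤ) - (N - lev z : ℕ)) (pos z) := by
    rw [sub_eq_add_neg, ← Finset.sum_neg_distrib]
    refine congrArg₂ _ (if_congr (by omega) rfl rfl) (Finset.sum_congr rfl fun z _ => ?_)
    have := hlev z
    rw [show ((N - j : ℕ) : ℤ) - (N - lev z : ℕ) = (lev z : ℤ) - j by omega]
    ring
  rw [hfun, hval]
  exact h3

lemma det_one_add_of_level_lt [DecidableEq ι] (lev : ι → ℕ) {A : Matrix ι ι ℂ}
    (h : ∀ i j, lev j ≤ lev i → A i j = 0) : (1 + A).det = 1 := by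
  have hT : (1 + A).BlockTriangular lev := fun i j hij => by
    rw [Matrix.add_apply, h i j hij.le, Matrix.one_apply_ne (by rintro rfl; exact hij.false),
      add_zero]
  rw [hT.det]
  refine Finset.prod_eq_one fun k _ => ?_
  have : (1 + A).toSquareBlock lev k = 1 := by
    ext i j
    rw [Matrix.toSquareBlock_def, Matrix.of_apply, Matrix.add_apply,
      h i j (j.2.trans i.2.symm).le, add_zero, Matrix.one_apply, Matrix.one_apply]
    exact if_congr Subtype.ext_iff.symm rfl rfl
  rw [this, Matrix.det_one]

lemma det_one_add_pert {N : ℕ} [DecidableEq ι] (hs : 0 < s) (hlb : ∀ x, s ≤ lam x)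
    (hub : ∀ x, lam x ≤ M) (hR : M < R) (hr : 0 < r) (t : ℝ) {lev pos : ι → ℕ}
    (hlev : ∀ z, lev z ≤ N) (a : ι → ℂ) :
    (Matrix.of fun i j : Fin (N + 1) => (if (i : ℕ) = (j : ℕ) then (1 : ℂ) else 0) +
        ∑ z, pertPhi lam r t lev pos a (lev z) i (pos z) * a z *
          kerPsi lam R t ((lev z : ℤ) - (j : ℕ)) (pos z)).det
      = (1 + Matrix.of fun z z' : ι => a z *
          Kker lam R r t (lev z + 1) (pos z) (lev z' + 1) (pos z')).det := by
  have hpos : ∀ x, 0 < lam x := fun x => hs.trans_le (hlb x)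
  set F : Matrix (Fin (N + 1)) ι ℂ := Matrix.of fun i z =>
    pertPhi lam r t lev pos a (lev z) i (pos z) with hF
  set F₀ : Matrix (Fin (N + 1)) ι ℂ := Matrix.of fun i z =>
    kerPhi lam r t ((lev z : ℤ) - (i : ℕ)) (pos z) with hF₀
  set P : Matrix ι (Fin (N + 1)) ℂ := Matrix.of fun z j => a z *
    kerPsi lam R t ((lev z : ℤ) - (j : ℕ)) (pos z) with hP
  set W : Matrix ι ι ℂ := Matrix.of fun z z' => a z *
    (if lev z < lev z' then kerTrans lam R (lev z' - lev z) (pos z) (pos z') else 0) with hW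
  have h1 : (Matrix.of fun i j : Fin (N + 1) => (if (i : ℕ) = (j : ℕ) then (1 : ℂ) else 0) +
        ∑ z, pertPhi lam r t lev pos a (lev z) i (pos z) * a z *
          kerPsi lam R t ((lev z : ℤ) - (j : ℕ)) (pos z)) = 1 + F * P := by
    ext i j
    simp only [Matrix.of_apply, Matrix.add_apply, Matrix.one_apply, Matrix.mul_apply, hF, hP,
      Fin.ext_iff, mul_assoc]
  have h2 : F + F * W = F₀ := by
    ext i z
    have := pertPhi_eq hpos hub hR hr t lev pos a (lev z) i (pos z)
    simp only [Matrix.add_apply, Matrix.mul_apply, hF, hW, hF₀, Matrix.of_apply, mul_ite, mul_zero,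
      ← mul_assoc]
    rw [this, sub_add_cancel]
  have h3 : (1 + Matrix.of fun z z' : ι => a z *
      Kker lam R r t (lev z + 1) (pos z) (lev z' + 1) (pos z')) = (1 + P * F) * (1 + W) := by
    have : (1 + P * F) * (1 + W) = 1 + (W + P * F₀) := by
      rw [← h2]
      simp only [add_mul, Matrix.mul_add, one_mul, mul_one, Matrix.mul_assoc]
      abel
    rw [this]
    congr 1
    ext z z'
    rw [Matrix.of_apply, Kker_eq hs hlb hub hR hr t (hlev z'), mul_add, Finset.mul_sum]
    simp only [hW, hP, hF₀, Matrix.add_apply, Matrix.mul_apply, Matrix.of_apply, mul_assoc]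
  rw [h1, h3, Matrix.det_mul, Matrix.det_one_add_mul_comm, det_one_add_of_level_lt lev (A := W),
    mul_one]
  intro z z' h
  simp [hW, h.not_gt]

end PerturbedLevels

section Andreief

lemma hasSum_mul_prod {α β : Type*} {f : α → ℂ} {g : β → ℂ} {s t : ℂ} (hf : HasSum f s)
    (hg : HasSum g t) : HasSum (fun p : α × β => f p.1 * g p.2) (s * t) :=
  hf.mul hg (summable_mul_of_summable_norm hf.summable.norm hg.summable.norm)

lemma hasSum_pi_prod {n : ℕ} {α : Type*} {h : Fin n → α → ℂ} {S : Fin n → ℂ}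
    (hS : ∀ i, HasSum (h i) (S i)) :
    HasSum (fun y : Fin n → α => ∏ i, h i (y i)) (∏ i, S i) := by
  induction n with
  | zero => simp
  | succ n ih =>
    have h1 := ih fun i => hS i.succ
    have h2 := hasSum_mul_prod (hS 0) h1
    let e : α × (Fin n → α) ≃ (Fin (n + 1) → α) := Fin.consEquiv fun _ => α
    have hf : (fun y : Fin (n + 1) → α => ∏ i, h i (y i)) ∘ e
        = fun p => h 0 p.1 * ∏ i : Fin n, h i.succ (p.2 i) := by
      funext p
      simp [e, Fin.prod_univ_succ]
    rw [← e.hasSum_iff, Fin.prod_univ_succ, hf]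
    exact h2

lemma hasSum_det_mul_det {n : ℕ} {f g : Fin n → ℕ → ℂ} {G : Fin n → Fin n → ℂ}
    (hG : ∀ i j, HasSum (fun u => f i u * g j u) (G i j)) :
    HasSum (fun x : {x : Fin n → ℕ // StrictMono x} => (Matrix.of fun i j => f i (x.1 j)).det *
      (Matrix.of fun i j => g i (x.1 j)).det) (Matrix.of G).det := by
  have h1 : HasSum (fun y : Fin n → ℕ => (Matrix.of fun i j => f i (y j)).det * ∏ j, g j (y j))
      (Matrix.of G).det := by
    simp only [Matrix.det_apply', Finset.sum_mul, Matrix.of_apply]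
    refine hasSum_sum fun σ _ => ?_
    simp only [mul_assoc, ← Finset.prod_mul_distrib]
    exact (hasSum_pi_prod fun j => hG (σ j) j).mul_left _
  have hinj : Function.Injective fun p : {x : Fin n → ℕ // StrictMono x} × Equiv.Perm (Fin n) =>
      p.1.1 ∘ p.2 := by
    rintro ⟨⟨x, hx⟩, σ⟩ ⟨⟨x', hx'⟩, σ'⟩ h
    simp only at h
    have hxx : x = x' := by
      rw [← hx.range_inj hx', ← σ.surjective.range_comp x, h, σ'.surjective.range_comp]
    subst hxx
    have : σ = σ' := Equiv.ext fun i => hx.injective (congrFun h i)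
    rw [this]
  rw [← hinj.hasSum_iff] at h1
  · refine h1.prod_fiberwise fun x => ?_
    have : (Matrix.of fun i j => f i (x.1 j)).det * (Matrix.of fun i j => g i (x.1 j)).det
        = ∑ σ : Equiv.Perm (Fin n), (Matrix.of fun i j => f i (x.1 (σ j))).det *
          ∏ j, g j (x.1 (σ j)) := by
      rw [← Matrix.det_transpose (Matrix.of fun i j => g i (x.1 j)),
        Matrix.det_apply' (Matrix.transpose _),
        Finset.mul_sum]
      refine Finset.sum_congr rfl fun σ _ => ?_
      have := Matrix.det_permute' σ (Matrix.of fun i j => f i (x.1 j))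
      change (Matrix.of fun i j => f i (x.1 (σ j))).det = _ at this
      rw [this]
      simp only [Matrix.transpose_apply, Matrix.of_apply]
      ring
    rw [this]
    exact hasSum_fintype _
  · intro y hy
    have hny : ¬Function.Injective y := fun hyi => hy
      ⟨(⟨y ∘ Tuple.sort y, (Tuple.monotone_sort y).strictMono_of_injective
        (hyi.comp (Tuple.sort y).injective)⟩, (Tuple.sort y)⁻¹), by ext; simp⟩
    obtain ⟨i, j, hij, hne⟩ : ∃ i j, y i = y j ∧ i ≠ j := by
      simpa [Function.Injective] using hny
    rw [Matrix.det_zero_of_column_eq hne fun k => by simp [hij], zero_mul]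

end Andreief

section Correlations

open scoped Classical in
/-- A function of patterns, seen as a function on the graph of the top level map. -/
noncomputable def topGraph {N : ℕ} (h : GTpat N → ℂ)
    (p : {x : Fin (N + 1) → ℕ // StrictMono x} × GTpat N) : ℂ :=
  if IsGT p.2 ∧ p.2 (Fin.last N) = p.1.1 then h p.2 else 0

lemma hasSum_subtype_of_hasSum_topGraph {N : ℕ} {h : GTpat N → ℂ} {c : ℂ}
    (hc : HasSum (topGraph h) c) : HasSum (fun X : {X : GTpat N // IsGT X} => h X.1) c := by
  have hinj : Function.Injective fun X : {X : GTpat N // IsGT X} =>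
      ((⟨X.1 (Fin.last N), X.2.1 _⟩, X.1) : {x : Fin (N + 1) → ℕ // StrictMono x} × GTpat N) :=
    fun X Y hXY => Subtype.ext (Prod.mk.inj hXY).2
  rw [← hinj.hasSum_iff] at hc
  · have hf : topGraph h ∘ (fun X : {X : GTpat N // IsGT X} =>
        ((⟨X.1 (Fin.last N), X.2.1 _⟩, X.1) : {x : Fin (N + 1) → ℕ // StrictMono x} × GTpat N))
        = fun X => h X.1 := by
      funext X
      simp [topGraph, X.2]
    rwa [hf] at hc
  · rintro ⟨⟨x, hx⟩, X⟩ hX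
    rw [topGraph, if_neg]
    rintro ⟨h1, h2⟩
    refine hX ⟨⟨X, h1⟩, ?_⟩
    simp only at h2
    subst h2
    rfl

/-- The product over all entries of a pattern of one plus the mass they carry. -/
noncomputable def massProd {ι : Type*} [Fintype ι] (lev pos : ι → ℕ) (a : ι → ℂ) {N : ℕ}
    (X : GTpat N) : ℂ :=
  ∏ m : Fin (N + 1), ∏ j, (1 + levelMass lev pos a m (X m j))

variable {ι : Type*} [Fintype ι] {lam : ℕ → ℝ} {s M R r : ℝ}

open scoped Classical in
lemma hasSum_topGraph_fiber (hs : 0 < s) (hlb : ∀ x, s ≤ lam x) (hub : ∀ x, lam x ≤ M)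
    (hR : M < R) (hr : 0 < r) (t : ℝ) (N : ℕ) (lev pos : ι → ℕ) (a : ι → ℂ)
    (x : {x : Fin (N + 1) → ℕ // StrictMono x}) :
    HasSum (fun X => topGraph (fun X => dens lam R t N X * massProd lev pos a X) (x, X))
      ((Matrix.of fun i j : Fin (N + 1) => pertPhi lam r t lev pos a N i (x.1 j)).det *
        (Matrix.of fun i j : Fin (N + 1) => (1 + levelMass lev pos a N (x.1 j)) *
          kerPsi lam R t ((N : ℤ) - (i : ℕ)) (x.1 j)).det) := by
  have hpos : ∀ x, 0 < lam x := fun x => hs.trans_le (hlb x)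
  have h1 := (hasSum_levelWeight (fun m hm => kerPhiZero_of_neg hr t hm) (kerPhiZero_zero hr t)
    (fun l u => (1 + levelMass lev pos a l u) / lam u) N x.2).mul_right
    (Matrix.of fun i j : Fin (N + 1) => (1 + levelMass lev pos a N (x.1 j)) *
          kerPsi lam R t ((N : ℤ) - (i : ℕ)) (x.1 j)).det
  have hf : (fun X => topGraph (fun X => dens lam R t N X * massProd lev pos a X) (x, X))
      = fun X => (if IsGT X ∧ X (Fin.last N) = x.1 then
        levelWeight (fun l u => (1 + levelMass lev pos a l u) / lam u) X else 0) *
        (Matrix.of fun i j : Fin (N + 1) => (1 + levelMass lev pos a N (x.1 j)) *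
          kerPsi lam R t ((N : ℤ) - (i : ℕ)) (x.1 j)).det := by
    funext X
    rw [topGraph, ite_mul, zero_mul]
    refine if_ctx_congr Iff.rfl (fun hX => ?_) fun _ => rfl
    have h2 := Matrix.det_mul_row (fun j => 1 + levelMass lev pos a N (x.1 j))
      (Matrix.of fun i j : Fin (N + 1) => kerPsi lam R t ((N : ℤ) - (i : ℕ)) (x.1 j))
    simp only [Matrix.of_apply] at h2
    rw [dens_eq hpos hub hR t N hX.1, h2, hX.2, massProd, Fin.prod_univ_castSucc, levelWeight]
    have h3 : ∏ j, (1 + levelMass lev pos a (Fin.last N) (X (Fin.last N) j))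
        = ∏ j, (1 + levelMass lev pos a N (x.1 j)) := by
      rw [hX.2]
      rfl
    rw [h3]
    simp only [div_eq_mul_inv, Finset.prod_mul_distrib, Fin.val_castSucc]
    ring
  rw [hf]
  exact h1

lemma hasSum_topGraph (hs : 0 < s) (hlb : ∀ x, s ≤ lam x) (hub : ∀ x, lam x ≤ M) (hR : M < R)
    (hr : 0 < r) (t : ℝ) [DecidableEq ι] {N : ℕ} {lev pos : ι → ℕ} (hlev : ∀ z, lev z ≤ N)
    (a : ι → ℂ) :
    HasSum (fun x : {x : Fin (N + 1) → ℕ // StrictMono x} =>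
      (Matrix.of fun i j : Fin (N + 1) => pertPhi lam r t lev pos a N i (x.1 j)).det *
        (Matrix.of fun i j : Fin (N + 1) => (1 + levelMass lev pos a N (x.1 j)) *
          kerPsi lam R t ((N : ℤ) - (i : ℕ)) (x.1 j)).det)
      (1 + Matrix.of fun z z' : ι => a z *
        Kker lam R r t (lev z + 1) (pos z) (lev z' + 1) (pos z')).det := by
  rw [← det_one_add_pert hs hlb hub hR hr t hlev a]
  exact hasSum_det_mul_det (f := fun (i : Fin (N + 1)) u => pertPhi lam r t lev pos a N i u)
    (g := fun (j : Fin (N + 1)) u => (1 + levelMass lev pos a N u) *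
      kerPsi lam R t ((N : ℤ) - (j : ℕ)) u) fun i j =>
    hasSum_pertPhi_mul_kerPsi hs hlb hub hR hr t hlev a (Nat.lt_succ_iff.1 i.2)
      (Nat.lt_succ_iff.1 j.2)

lemma summable_topGraph_dens (hs : 0 < s) (hlb : ∀ x, s ≤ lam x) (hub : ∀ x, lam x ≤ M)
    (hR : M < R) (t : ℝ) (ht : 0 ≤ t) (N : ℕ) : Summable (topGraph (dens lam R t N)) := by
  have hpos : ∀ x, 0 < lam x := fun x => hs.trans_le (hlb x)
  have h0 : ∀ p, 0 ≤ topGraph (dens lam R t N) p := fun p => by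
    rw [topGraph]
    split_ifs with h
    · exact dens_nonneg hpos hub hR ht h.1
    · exact le_rfl
  have hre : ∀ p, topGraph (dens lam R t N) p = ((topGraph (dens lam R t N) p).re : ℂ) :=
    fun p => Complex.eq_re_of_ofReal_le (h0 p)
  have hd : (fun X : GTpat N => dens lam R t N X * massProd (Fin.elim0 : Fin 0 → ℕ) Fin.elim0
      Fin.elim0 X) = dens lam R t N := by
    funext X
    simp [massProd, levelMass]
  have h1 := fun x => Complex.hasSum_re
    (hasSum_topGraph_fiber hs hlb hub hR one_pos t N (Fin.elim0 : Fin 0 → ℕ) Fin.elim0 Fin.elim0 x)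
  have h2 := Complex.hasSum_re (hasSum_topGraph hs hlb hub hR one_pos t (N := N)
    (lev := (Fin.elim0 : Fin 0 → ℕ)) (pos := Fin.elim0) (fun z => z.elim0) Fin.elim0)
  rw [hd] at h1
  have h3 : Summable fun p => (topGraph (dens lam R t N) p).re := by
    rw [summable_prod_of_nonneg fun p => (Complex.nonneg_iff.1 (h0 p)).1]
    refine ⟨fun x => (h1 x).summable, ?_⟩
    simp only [fun x => (h1 x).tsum_eq]
    exact h2.summable
  rw [funext hre]
  exact Complex.summable_ofReal.2 h3

lemma hasSum_dens_mul_massProd (hs : 0 < s) (hlb : ∀ x, s ≤ lam x) (hub : ∀ x, lam x ≤ M)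
    (hR : M < R) (hr : 0 < r) (t : ℝ) (ht : 0 ≤ t) [DecidableEq ι] {N : ℕ} {lev pos : ι → ℕ}
    (hlev : ∀ z, lev z ≤ N) {a : ι → ℂ} (ha : ∀ X : GTpat N, ‖massProd lev pos a X‖ ≤ 1) :
    HasSum (fun X : {X : GTpat N // IsGT X} => dens lam R t N X.1 * massProd lev pos a X.1)
      (1 + Matrix.of fun z z' : ι => a z *
        Kker lam R r t (lev z + 1) (pos z) (lev z' + 1) (pos z')).det := by
  have hsum : Summable (topGraph fun X : GTpat N => dens lam R t N X * massProd lev pos a X) := by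
    refine (summable_topGraph_dens hs hlb hub hR t ht N).norm.of_norm_bounded fun p => ?_
    rw [topGraph, topGraph]
    split_ifs
    · rw [norm_mul]
      exact mul_le_of_le_one_right (norm_nonneg _) (ha _)
    · exact le_rfl
  have h1 := HasSum.prod_fiberwise hsum.hasSum
    (hasSum_topGraph_fiber hs hlb hub hR hr t N lev pos a)
  rw [← h1.unique (hasSum_topGraph hs hlb hub hR hr t hlev a)]
  exact hasSum_subtype_of_hasSum_topGraph
    (h := fun X => dens lam R t N X * massProd lev pos a X) hsum.hasSum

end Correlations

section InclusionExclusion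

open scoped Classical in
lemma massProd_neg_indicator {k N : ℕ} {z : Fin k → Fin (N + 1) × ℕ} (hz : Function.Injective z)
    (S : Finset (Fin k)) (X : GTpat N) :
    massProd (fun i => ((z i).1 : ℕ)) (fun i => (z i).2) (fun i => if i ∈ S then -1 else 0) X
      = ∏ i ∈ S, (1 - if ∃ j, X (z i).1 j = (z i).2 then (1 : ℂ) else 0) := by
  have h1 : ∀ (m : Fin (N + 1)) (u : ℕ), 1 + levelMass (fun i => ((z i).1 : ℕ)) (fun i => (z i).2)
      (fun i => if i ∈ S then -1 else 0) m u
      = ∏ i ∈ S, (1 - if z i = (m, u) then (1 : ℂ) else 0) := by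
    intro m u
    have h2 : ∀ i, (((z i).1 : ℕ) = m ∧ (z i).2 = u) ↔ z i = (m, u) := fun i => by
      rw [Prod.ext_iff, Fin.ext_iff]
    simp only [levelMass, h2]
    by_cases h : ∃ i ∈ S, z i = (m, u)
    · obtain ⟨i, hi, hiz⟩ := h
      rw [Finset.prod_eq_zero hi (by simp [hiz]), Finset.sum_eq_single i]
      · simp [hi, hiz]
      · intro i' _ hne
        rw [if_neg fun h' => hne (hz (h'.trans hiz.symm))]
      · simp
    · push Not at h
      rw [Finset.prod_eq_one fun i hi => by simp [h i hi], Finset.sum_eq_zero, add_zero]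
      intro i _
      by_cases hi : i ∈ S
      · rw [if_neg (h i hi)]
      · simp [hi]
  simp only [massProd, h1]
  rw [Finset.prod_congr rfl fun m _ => Finset.prod_comm, Finset.prod_comm]
  refine Finset.prod_congr rfl fun i _ => ?_
  by_cases h : ∃ j, X (z i).1 j = (z i).2
  · obtain ⟨j, hj⟩ := h
    rw [if_pos ⟨j, hj⟩, sub_self]
    exact Finset.prod_eq_zero (Finset.mem_univ (z i).1)
      (Finset.prod_eq_zero (Finset.mem_univ j) (by simp [hj]))
  · rw [if_neg h, sub_zero]
    refine Finset.prod_eq_one fun m _ => Finset.prod_eq_one fun j _ => ?_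
    rw [if_neg, sub_zero]
    intro hm
    exact h (by rw [hm]; exact ⟨j, rfl⟩)

lemma det_eq_sum_det_one_add {k : ℕ} (K : Matrix (Fin k) (Fin k) ℂ) :
    K.det = ∑ S : Finset (Fin k), (-1) ^ S.card *
      (1 + Matrix.of fun i j => (if i ∈ S then -1 else 0) * K i j).det := by
  set f := (Matrix.detRowAlternating (n := Fin k) (R := ℂ)).toMultilinearMap
  set e : Fin k → Fin k → ℂ := fun i j => (1 : Matrix (Fin k) (Fin k) ℂ) i j with he
  have h1 : K.det = f ((fun i j => K i j - e i j) + e) := by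
    change Matrix.det K = Matrix.det _
    congr 1
    ext i j
    simp
  rw [h1, MultilinearMap.map_add_univ]
  refine Finset.sum_congr rfl fun S _ => ?_
  set A : Fin k → Fin k → ℂ := fun i j => e i j + (if i ∈ S then -1 else 0) * K i j with hA
  have h2 := f.map_piecewise_smul (fun _ => (-1 : ℂ)) A S
  rw [Finset.prod_const, smul_eq_mul] at h2
  have h3 : S.piecewise (fun i j => K i j - e i j) e
      = S.piecewise (fun i => (-1 : ℂ) • A i) A := by
    refine Finset.piecewise_congr _ (fun i hi => ?_) fun i hi => ?_
    · ext j
      simp only [hA, Pi.smul_apply, if_pos hi, smul_eq_mul]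
      ring
    · ext j
      simp [hA, hi]
  rw [h3]
  exact h2

lemma sum_prod_one_sub {k : ℕ} (e : Fin k → ℂ) :
    ∑ S : Finset (Fin k), (-1) ^ S.card * ∏ i ∈ S, (1 - e i) = ∏ i, e i := by
  have h := Finset.prod_add (fun i => -(1 - e i)) (fun _ => 1) Finset.univ
  simp only [Finset.powerset_univ, Finset.prod_const_one, mul_one, Finset.prod_neg] at h
  rw [← h]
  exact Finset.prod_congr rfl fun i _ => by ring

end InclusionExclusion

/-- for the Gibbs measure M^t on Gelfand–Tsetlin patterns with N+1 ≥ 1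
levels started from the densely packed configuration (𝔓_t applied to Δ_{N+1} on top,
links 𝔏 below), the density is nonnegative, has total mass 1, and the associated point
process has determinantal correlation functions with kernel K_t: for any k ≥ 1 and
distinct points z_1,…,z_k ∈ {1,…,N+1} × ℤ₊ (level recorded 0-based as an element of
Fin (N+1)), the probability that for every i the value (z i).2 occurs among the
coordinates of level (z i).1 equals det[K_t(z_i, z_j)]. -/
theorem stmt_0 (lam : ℕ → ℝ) (s M : ℝ) (hs : 0 < s)
    (hlb : ∀ x, s ≤ lam x) (hub : ∀ x, lam x ≤ M)
    (R r : ℝ) (hR : M < R) (hr0 : 0 < r) (hrs : r < s)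
    (t : ℝ) (ht : 0 ≤ t) (N : ℕ) :
    (∀ X : { X : GTpat N // IsGT X }, 0 ≤ dens lam R t N X.1) ∧
    HasSum (fun X : { X : GTpat N // IsGT X } => dens lam R t N X.1) 1 ∧
    ∀ (k : ℕ), 1 ≤ k → ∀ z : Fin k → Fin (N + 1) × ℕ, Function.Injective z →
      HasSum
        (fun X : { X : GTpat N //
            IsGT X ∧ ∀ i : Fin k, ∃ j : Fin (((z i).1 : ℕ) + 1), X ((z i).1) j = (z i).2 } =>
          dens lam R t N X.1)
        ((Matrix.of fun i j : Fin k =>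
          Kker lam R r t (((z i).1 : ℕ) + 1) ((z i).2)
            (((z j).1 : ℕ) + 1) ((z j).2)).det) := by
  have hpos : ∀ x, 0 < lam x := fun x => hs.trans_le (hlb x)
  refine ⟨fun X => dens_nonneg hpos hub hR ht X.2, ?_, fun k _ z hz => ?_⟩
  · have h := hasSum_dens_mul_massProd hs hlb hub hR hr0 t ht (N := N)
      (lev := (Fin.elim0 : Fin 0 → ℕ)) (pos := Fin.elim0) (a := Fin.elim0) (fun z => z.elim0)
      (fun X => by simp [massProd, levelMass])
    simpa [massProd, levelMass] using h
  · classical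
    set K : Matrix (Fin k) (Fin k) ℂ := Matrix.of fun i j : Fin k =>
      Kker lam R r t (((z i).1 : ℕ) + 1) ((z i).2) (((z j).1 : ℕ) + 1) ((z j).2)
    set e : Fin k → GTpat N → ℂ := fun i X => if ∃ j, X (z i).1 j = (z i).2 then 1 else 0 with he
    have h1 : ∀ S : Finset (Fin k), HasSum (fun X : {X : GTpat N // IsGT X} =>
        dens lam R t N X.1 * ∏ i ∈ S, (1 - e i X.1))
        (1 + Matrix.of fun i j => (if i ∈ S then -1 else 0) * K i j).det := by
      intro S
      have h := hasSum_dens_mul_massProd hs hlb hub hR hr0 t ht (N := N)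
        (lev := fun i => ((z i).1 : ℕ)) (pos := fun i => (z i).2)
        (a := fun i => if i ∈ S then -1 else 0) (fun i => Nat.lt_succ_iff.1 (z i).1.2)
        (fun X => by
          rw [massProd_neg_indicator hz, norm_prod]
          refine Finset.prod_le_one (fun _ _ => norm_nonneg _) fun i _ => ?_
          split_ifs <;> simp)
      simp only [massProd_neg_indicator hz] at h
      exact h
    have h2 := hasSum_sum (s := Finset.univ) fun (S : Finset (Fin k)) _ =>
      (h1 S).mul_left ((-1) ^ S.card)
    rw [← det_eq_sum_det_one_add] at h2
    have hinj : Function.Injective fun X : {X : GTpat N // IsGT X ∧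
        ∀ i : Fin k, ∃ j : Fin (((z i).1 : ℕ) + 1), X ((z i).1) j = (z i).2} =>
        (⟨X.1, X.2.1⟩ : {X : GTpat N // IsGT X}) :=
      fun X Y h => Subtype.ext (Subtype.mk.inj h)
    have h3 : ∀ X : {X : GTpat N // IsGT X}, ∑ S : Finset (Fin k), (-1) ^ S.card *
        (dens lam R t N X.1 * ∏ i ∈ S, (1 - e i X.1)) = dens lam R t N X.1 * ∏ i, e i X.1 := by
      intro X
      rw [← sum_prod_one_sub, Finset.mul_sum]
      exact Finset.sum_congr rfl fun S _ => mul_left_comm _ _ _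
    simp only [h3] at h2
    rw [← hinj.hasSum_iff] at h2
    · have hf : ((fun X : {X : GTpat N // IsGT X} => dens lam R t N X.1 * ∏ i, e i X.1) ∘
          fun X : {X : GTpat N // IsGT X ∧
            ∀ i : Fin k, ∃ j : Fin (((z i).1 : ℕ) + 1), X ((z i).1) j = (z i).2} =>
            (⟨X.1, X.2.1⟩ : {X : GTpat N // IsGT X})) = fun X => dens lam R t N X.1 := by
        funext X
        simp only [Function.comp_apply]
        rw [Finset.prod_eq_one fun i _ => if_pos (X.2.2 i), mul_one]
      rwa [hf] at h2
    · intro X hX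
      obtain ⟨i, hi⟩ : ∃ i, ¬∃ j, X.1 (z i).1 j = (z i).2 := by
        by_contra! h
        exact hX ⟨⟨X.1, X.2, h⟩, rfl⟩
      rw [Finset.prod_eq_zero (Finset.mem_univ i) (if_neg hi), mul_zero]
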